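/- arXiv:math/0508326 — 3 statements merged into one kernel-verified Lean document; each statement's English description precedes it below -/
import Mathlib

section
/- Let k be an algebraically closed field of characteristic 0, let r ≥ 2, and let F ∈ k[z_1,…,z_{r+2}] be an irreducible homogeneous polynomial of degree at least 3 defining the integral hypersurface Z = {F = 0} ⊂ P^{r+1}. Suppose the singular locus of Z has codimension at least three in Z; i.e. the Krull dimension of k[z_1,…,z_{r+2}]/(F, ∂F/∂z_1, …, ∂F/∂z_{r+2}) is at most r−2. Then only finitely many r-dimensional k-linear subspaces of k^{r+2} are contained in {z ∈ k^{r+2} : F(z) = 0} (i.e. only finitely many (r−1)-planes lie on Z). -/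
open MvPolynomial

/-!
Every subspace of codimension two is the graph of a matrix `A` with two rows, for a suitable choice
of the free coordinates. A tangent vector `N` at `A` to the space of graphs on which `F` vanishes
satisfies `G₀ ℓ₀ + G₁ ℓ₁ = 0`, where `G₀, G₁` are the restrictions to the graph of the partial
derivatives of `F` in the two dependent coordinates, and `ℓ₀, ℓ₁` are the linear forms given by the
rows of `N`. On the graph the other partial derivatives are combinations of `G₀` and `G₁`, so a
common factor of `G₀` and `G₁` would make the hypersurface singular along a divisor of the graph,
which has only codimension two in the hypersurface. Hence `G₀` and `G₁` are coprime; having degree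
`d - 1 ≥ 2`, they admit no linear syzygy, and `N = 0`. By Nakayama, a point with zero tangent space
is a minimal prime of the ideal of equations, and there are only finitely many of those.
-/

section Commutative

theorem mem_minimalPrimes_of_le_sup_sq {R : Type*} [CommRing R] {I P : Ideal R} [hP : P.IsPrime]
    (hfg : P.FG) (hIP : I ≤ P) (hPI : P ≤ I ⊔ P ^ 2) : P ∈ I.minimalPrimes := by
  rw [pow_two] at hPI
  obtain ⟨a, ha, haP⟩ :=
    Submodule.exists_sub_one_mem_and_smul_le_of_fg_of_le_sup hfg le_rfl hPI
  refine ⟨⟨hP, hIP⟩, fun Q ⟨hQ, hIQ⟩ hQP x hx => ?_⟩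
  have hax : a * x ∈ Q := hIQ (haP (Submodule.smul_mem_pointwise_smul x a _ hx))
  refine (hQ.mem_or_mem hax).resolve_left fun haQ => hP.one_notMem ?_
  simpa using sub_mem (hQP haQ) ha

variable {k σ ι : Type*} [Field k]

theorem height_eq_natCard_of_isMaximal [Finite σ] (M : Ideal (MvPolynomial σ k)) [M.IsMaximal] :
    M.height = Nat.card σ := by
  induction σ using Finite.induction_empty_option with
  | @of_equiv α β e ih =>
    have : (M.comap (renameEquiv k e)).IsMaximal := Ideal.comap_isMaximal_of_equiv _
    rw [← RingEquiv.height_comap (renameEquiv k e).toRingEquiv M, ← Nat.card_congr e]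
    exact ih _
  | h_empty =>
    have hfield : IsField (MvPolynomial PEmpty k) :=
      (isEmptyAlgEquiv k PEmpty).toMulEquiv.isField (Field.toIsField k)
    let := hfield.toField
    rw [Ideal.eq_bot_of_prime M]
    simp
  | @h_option α _ ih =>
    let e := optionEquivLeft k α
    have hM : (M.map e).IsMaximal := Ideal.map_isMaximal_of_equiv e
    have hp := Polynomial.isMaximal_comap_C_of_isJacobsonRing (M.map e)
    have : (M.map e).LiesOver ((M.map e).comap Polynomial.C) := ⟨rfl⟩
    rw [← RingEquiv.height_map e.toRingEquiv M]
    change (M.map e).height = _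
    rw [Polynomial.height_eq_height_add_one ((M.map e).comap Polynomial.C), ih]
    simp

theorem natCard_le_ringKrullDim_quotient_span_singleton_add_one [Finite σ]
    {g : MvPolynomial σ k} (hg : ¬IsUnit g) :
    (Nat.card σ : WithBot ℕ∞) ≤ ringKrullDim (MvPolynomial σ k ⧸ Ideal.span {g}) + 1 := by
  obtain ⟨M, hM, hgM⟩ := exists_max_ideal_of_mem_nonunits hg
  have := hM.isPrime
  have h := Ideal.height_le_ringKrullDim_quotient_add_one hgM
  rwa [height_eq_natCard_of_isMaximal] at h

theorem isUnit_of_map_le_span_singleton {R : Type*} [CommRing R] [Finite ι]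
    {φ : R →+* MvPolynomial ι k} (hφ : Function.Surjective φ) {I : Ideal R}
    (hI : ringKrullDim (R ⧸ I) + 2 ≤ (Nat.card ι : WithBot ℕ∞)) {g : MvPolynomial ι k}
    (hg : I.map φ ≤ Ideal.span {g}) : IsUnit g := by
  by_contra hunit
  have hdim : ringKrullDim (MvPolynomial ι k ⧸ Ideal.span {g}) ≤ ringKrullDim (R ⧸ I) :=
    ringKrullDim_le_of_surjective (Ideal.quotientMap _ φ (Ideal.map_le_iff_le_comap.1 hg))
      (Ideal.quotientMap_surjective hφ)
  have hcard : (Nat.card ι : WithBot ℕ∞) + 1 ≤ Nat.card ι :=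
    calc (Nat.card ι : WithBot ℕ∞) + 1
        ≤ ringKrullDim (MvPolynomial ι k ⧸ Ideal.span {g}) + 1 + 1 := by
          gcongr; exact natCard_le_ringKrullDim_quotient_span_singleton_add_one hunit
      _ ≤ ringKrullDim (R ⧸ I) + 1 + 1 := by gcongr
      _ ≤ Nat.card ι := by rwa [add_assoc, one_add_one_eq_two]
  have : Nat.card ι + 1 ≤ Nat.card ι := by exact_mod_cast hcard
  omega

theorem eq_zero_of_dvd_of_isHomogeneous_of_lt {R : Type*} [CommRing R] [IsDomain R]
    {p q : MvPolynomial σ R} {m n : ℕ}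
    (hp : p.IsHomogeneous m) (hq : q.IsHomogeneous n) (hmn : m < n) (hqp : q ∣ p) : p = 0 := by
  by_contra hp0
  have hdeg := totalDegree_le_of_dvd_of_isDomain hqp hp0
  rw [hp.totalDegree hp0, hq.totalDegree (ne_zero_of_dvd_ne_zero hp0 hqp)] at hdeg
  omega

theorem eq_zero_of_isRelPrime_of_mul_add_mul_eq_zero {R : Type*} [CommRing R] [IsDomain R]
    [UniqueFactorizationMonoid R] {a b p q : MvPolynomial σ R} {m n : ℕ}
    (hab : IsRelPrime a b) (ha : a.IsHomogeneous n) (hb : b.IsHomogeneous n)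
    (hp : p.IsHomogeneous m) (hq : q.IsHomogeneous m) (hmn : m < n) (h : a * p + b * q = 0) :
    p = 0 ∧ q = 0 := by
  have hbp : b ∣ p := hab.symm.dvd_of_dvd_mul_left ⟨-q, by linear_combination h⟩
  have haq : a ∣ q := hab.dvd_of_dvd_mul_left ⟨-p, by linear_combination h⟩
  exact ⟨eq_zero_of_dvd_of_isHomogeneous_of_lt hp hb hmn hbp,
    eq_zero_of_dvd_of_isHomogeneous_of_lt hq ha hmn haq⟩

theorem derivation_aeval {R A : Type*} [CommRing R] [CommRing A] [Algebra R A] [Fintype σ]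
    (D : Derivation R A A) (g : σ → A) (F : MvPolynomial σ R) :
    D (aeval g F) = ∑ j, aeval g (pderiv j F) * D (g j) := by
  classical
  induction F using MvPolynomial.induction_on with
  | C a => simp
  | add p q hp hq => simp only [map_add, hp, hq, add_mul, Finset.sum_add_distrib]
  | mul_X p n hp =>
    have hX : ∑ j, aeval g (p * pderiv j (X n)) * D (g j) = aeval g p * D (g n) := by
      simp [pderiv_X, Pi.single_apply, apply_ite (aeval g)]
    simp only [map_mul, aeval_X, Derivation.leibniz, hp, smul_eq_mul, map_add, add_mul,
      Finset.sum_add_distrib, Finset.mul_sum] at hX ⊢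
    rw [hX]
    congr 1
    exact Finset.sum_congr rfl fun j _ => by ring

end Commutative

section ZeroLocus

variable {R k σ : Type*} [CommRing R] [Field k]

theorem ker_eval_eq_span (p : σ → R) :
    RingHom.ker (eval p) = Ideal.span (Set.range fun i => (X i - C (p i) : MvPolynomial σ R)) := by
  set I := Ideal.span (Set.range fun i => (X i - C (p i) : MvPolynomial σ R)) with hI
  have hmk : Ideal.Quotient.mk I = ((Ideal.Quotient.mk I).comp C).comp (eval p) :=
    ringHom_ext (by simp) fun i => by
      simpa [hI] using (Ideal.Quotient.eq (I := I)).2 (Ideal.subset_span (Set.mem_range_self i))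
  refine le_antisymm (fun f hf => ?_) ?_
  · rw [← Ideal.Quotient.eq_zero_iff_mem, hmk]
    simp [(RingHom.mem_ker).1 hf]
  · rw [hI, Ideal.span_le, Set.range_subset_iff]
    exact fun i => by simp [RingHom.mem_ker]

theorem ker_eval_injective :
    Function.Injective fun p : σ → R => RingHom.ker (eval p : MvPolynomial σ R →+* R) := by
  intro p q hpq
  funext i
  have hmem : (X i - C (p i) : MvPolynomial σ R) ∈ RingHom.ker (eval p) := by simp [RingHom.mem_ker]
  have hq := (SetLike.ext_iff.1 hpq _).1 hmem
  simpa [RingHom.mem_ker, sub_eq_zero, eq_comm] using hq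

/-- The gradient of a polynomial at the point `p`, as a linear map. -/
noncomputable def gradientAt (p : σ → R) : MvPolynomial σ R →ₗ[R] σ → R :=
  LinearMap.pi fun i => (aeval p).toLinearMap ∘ₗ (pderiv i).toLinearMap

theorem gradientAt_apply (p : σ → R) (f : MvPolynomial σ R) (i : σ) :
    gradientAt p f i = eval p (pderiv i f) := by
  simp [gradientAt, aeval_eq_eval]

theorem mem_ker_eval_sq [Finite σ] {p : σ → R} {f : MvPolynomial σ R} (hf : eval p f = 0)
    (hgrad : gradientAt p f = 0) : f ∈ RingHom.ker (eval p) ^ 2 := by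
  classical
  have := Fintype.ofFinite σ
  have hmem : f ∈ RingHom.ker (eval p) := hf
  rw [ker_eval_eq_span, Ideal.mem_span_range_iff_exists_fun] at hmem
  obtain ⟨c, rfl⟩ := hmem
  have hc (j : σ) : eval p (c j) = 0 := by
    simpa [gradientAt_apply, pderiv_X, Pi.single_apply, apply_ite (eval p)] using congrFun hgrad j
  rw [pow_two]
  exact Ideal.sum_mem _ fun i _ => Ideal.mul_mem_mul (hc i) (by simp [RingHom.mem_ker])

variable [Fintype σ]

theorem span_eq_top_of_forall_dotProduct {V : Set (σ → k)}
    (hV : ∀ v : σ → k, (∀ w ∈ V, w ⬝ᵥ v = 0) → v = 0) : Submodule.span k V = ⊤ := by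
  classical
  by_contra hne
  obtain ⟨φ, hφ, hφV⟩ := Submodule.exists_dual_map_eq_bot_of_lt_top (lt_top_iff_ne_top.2 hne)
    inferInstance
  have happly (w : σ → k) : φ w = w ⬝ᵥ fun i => φ (fun j => if i = j then 1 else 0) :=
    LinearMap.pi_apply_eq_sum_univ φ w
  have hzero := hV _ fun w hw => by
    rw [← happly, ← Submodule.mem_bot k, ← hφV]
    exact Submodule.mem_map_of_mem (Submodule.subset_span hw)
  exact hφ (LinearMap.ext fun w => by rw [happly, hzero, dotProduct_zero, LinearMap.zero_apply])

theorem ker_eval_mem_minimalPrimes_span {S : Set (MvPolynomial σ k)} {p : σ → k}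
    (hp : ∀ f ∈ S, eval p f = 0)
    (htan : ∀ v : σ → k, (∀ f ∈ S, gradientAt p f ⬝ᵥ v = 0) → v = 0) :
    RingHom.ker (eval p) ∈ (Ideal.span S).minimalPrimes := by
  have hSp : Ideal.span S ≤ RingHom.ker (eval p) := Ideal.span_le.2 hp
  have hspan : Submodule.span k (gradientAt p '' S) = ⊤ :=
    span_eq_top_of_forall_dotProduct fun v hv => htan v fun f hf => hv _ ⟨f, hf, rfl⟩
  have := RingHom.ker_isPrime (eval p)
  refine mem_minimalPrimes_of_le_sup_sq (IsNoetherian.noetherian _) hSp fun x hx => ?_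
  obtain ⟨f, hf, hfx⟩ : gradientAt p x ∈ (Submodule.span k S).map (gradientAt p) := by
    rw [Submodule.map_span, hspan]; trivial
  have hfS : f ∈ Ideal.span S := Submodule.span_le_restrictScalars k _ S hf
  have hsq : x - f ∈ RingHom.ker (eval p) ^ 2 :=
    mem_ker_eval_sq (sub_mem hx (hSp hfS)) (by rw [map_sub, hfx, sub_self])
  rw [← add_sub_cancel f x]
  exact Submodule.add_mem_sup hfS hsq

theorem finite_zeros_of_forall_tangent_eq_zero {S : Set (MvPolynomial σ k)}
    (htan : ∀ p : σ → k, (∀ f ∈ S, eval p f = 0) →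
      ∀ v : σ → k, (∀ f ∈ S, gradientAt p f ⬝ᵥ v = 0) → v = 0) :
    {p : σ → k | ∀ f ∈ S, eval p f = 0}.Finite :=
  .of_finite_image
    ((Ideal.finite_minimalPrimes_of_isNoetherianRing _ (Ideal.span S)).subset <|
      Set.image_subset_iff.2 fun p hp => ker_eval_mem_minimalPrimes_span hp (htan p hp))
    ker_eval_injective.injOn

end ZeroLocus

section Graph

variable {R k σ ι κ : Type*} [CommRing R] [Field k] [Fintype ι]

/-- The point with coordinates `(z, A z)`, where `e` splits the coordinates into free ones, indexed
by `ι`, and dependent ones, indexed by `κ`. Over a polynomial ring it is the universal point of one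
graph (`A` constant, `z` the variables) or of all graphs (`z` constant, `A` the variables). -/
def graphPoint (e : ι ⊕ κ ≃ σ) (A : Matrix κ ι R) (z : ι → R) : σ → R :=
  Sum.elim z (A.mulVec z) ∘ e.symm

section

variable (e : ι ⊕ κ ≃ σ) (A : Matrix κ ι R) (z : ι → R)

@[simp]
theorem graphPoint_inl (i : ι) : graphPoint e A z (e (.inl i)) = z i := by simp [graphPoint]

@[simp]
theorem graphPoint_inr (a : κ) : graphPoint e A z (e (.inr a)) = A.mulVec z a := by
  simp [graphPoint]

end

theorem eval_aeval_graphPoint {τ : Type*} (v : τ → R) (e : ι ⊕ κ ≃ σ)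
    (A : Matrix κ ι (MvPolynomial τ R)) (z : ι → MvPolynomial τ R) (F : MvPolynomial σ R) :
    eval v (aeval (graphPoint e A z) F) =
      eval (graphPoint e (A.map (eval v)) (eval v ∘ z)) F := by
  have hpoint : (fun j => aeval v (graphPoint e A z j)) =
      graphPoint e (A.map (eval v)) (eval v ∘ z) := by
    funext j
    obtain ⟨i | a, rfl⟩ := e.surjective j
    · simp [aeval_eq_eval]
    · simpa [aeval_eq_eval] using RingHom.map_mulVec (eval v) A z a
  rw [← aeval_eq_eval, comp_aeval_apply, hpoint, aeval_eq_eval, aeval_eq_eval]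

/-- The graph of `A` as a linear subspace, with the coordinates split by `e`. -/
def coordGraph (e : ι ⊕ κ ≃ σ) (A : Matrix κ ι R) : Submodule R (σ → R) :=
  (A.mulVecLin ∘ₗ LinearMap.funLeft R R (e ∘ Sum.inl)).eqLocus (LinearMap.funLeft R R (e ∘ Sum.inr))

theorem mem_coordGraph {e : ι ⊕ κ ≃ σ} {A : Matrix κ ι R} {x : σ → R} :
    x ∈ coordGraph e A ↔ A.mulVec (x ∘ e ∘ Sum.inl) = x ∘ e ∘ Sum.inr :=
  Iff.rfl

theorem graphPoint_mem_coordGraph (e : ι ⊕ κ ≃ σ) (A : Matrix κ ι R) (z : ι → R) :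
    graphPoint e A z ∈ coordGraph e A := by
  have hz : graphPoint e A z ∘ e ∘ Sum.inl = z := by ext i; simp
  rw [mem_coordGraph, hz]
  ext a
  simp

variable [Fintype κ]

theorem exists_equiv_comp_inr_eq [Fintype σ]
    (hcard : Fintype.card σ = Fintype.card ι + Fintype.card κ)
    {s : κ → σ} (hs : Function.Injective s) : ∃ e : ι ⊕ κ ≃ σ, e ∘ Sum.inr = s := by
  classical
  have hcompl : Fintype.card ι = Fintype.card ↥(Set.range s)ᶜ := by
    rw [Fintype.card_compl_set, Set.card_range_of_injective hs]
    omega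
  refine ⟨(Equiv.sumComm ι κ).trans <| (Equiv.sumCongr (Equiv.ofInjective s hs)
    (Fintype.equivOfCardEq hcompl)).trans (Equiv.Set.sumCompl (Set.range s)), ?_⟩
  ext a
  simp

theorem exists_basis_quotient_eq_mk_single [Finite σ] [DecidableEq σ]
    (W : Submodule k (σ → k))
    (hW : Module.finrank k ((σ → k) ⧸ W) = Fintype.card κ) :
    ∃ (s : κ → σ) (b : Module.Basis κ k ((σ → k) ⧸ W)),
      Function.Injective s ∧ ∀ a, b a = W.mkQ (Pi.single (s a) 1) := by
  let v : σ → (σ → k) ⧸ W := fun j => W.mkQ (Pi.single j 1)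
  have hv : Submodule.span k (Set.range v) = ⊤ := by
    have hrange : Set.range v = W.mkQ '' Set.range (Pi.basisFun k σ) := by
      rw [← Set.range_comp]
      congr 1
      funext j
      simp [v]
    rw [hrange, ← Submodule.map_span, (Pi.basisFun k σ).span_eq, Submodule.map_top,
      Submodule.range_mkQ]
  obtain ⟨τ, s, hs, hspan, hli⟩ := exists_linearIndependent' k v
  have := Finite.of_injective s hs
  have := Fintype.ofFinite τ
  let b := Module.Basis.mk hli (hspan.trans hv).ge
  let f : κ ≃ τ := Fintype.equivOfCardEq (by rw [← hW, Module.finrank_eq_card_basis b])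
  exact ⟨s ∘ f, b.reindex f.symm, hs.comp f.injective, fun a => by simp [b, v]⟩

/-- Coordinates whose classes form a basis of the quotient by `W` are functions of the remaining
ones on `W`. -/
theorem exists_eq_coordGraph [Fintype σ] (W : Submodule k (σ → k))
    (hW : Module.finrank k W = Fintype.card ι)
    (hcard : Fintype.card σ = Fintype.card ι + Fintype.card κ) :
    ∃ (e : ι ⊕ κ ≃ σ) (A : Matrix κ ι k), W = coordGraph e A := by
  classical
  have hquot := W.finrank_quotient_add_finrank
  rw [hW, Module.finrank_fintype_fun_eq_card, hcard] at hquot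
  obtain ⟨s, b, hs, hb⟩ := exists_basis_quotient_eq_mk_single (κ := κ) W (by omega)
  obtain ⟨e, rfl⟩ := exists_equiv_comp_inr_eq (ι := ι) hcard hs
  let A : Matrix κ ι k := fun a i => -b.repr (W.mkQ (Pi.single (e (.inl i)) 1)) a
  have hcoord (x : σ → k) (a : κ) :
      b.repr (W.mkQ x) a = x (e (.inr a)) - A.mulVec (x ∘ e ∘ Sum.inl) a := by
    have hx : W.mkQ x = ∑ i, x (e (.inl i)) • W.mkQ (Pi.single (e (.inl i)) 1) +
        ∑ a, x (e (.inr a)) • b a := by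
      conv_lhs => rw [pi_eq_sum_univ' x, ← e.sum_comp, Fintype.sum_sum_type]
      simp only [map_add, map_sum, map_smul, hb, Function.comp_apply]
    rw [hx, map_add, Finsupp.add_apply, b.repr_sum_self]
    simp [A, Matrix.mulVec, dotProduct, mul_comm]
    ring
  refine ⟨e, A, ?_⟩
  ext x
  rw [mem_coordGraph, ← Submodule.Quotient.mk_eq_zero, ← Submodule.mkQ_apply,
    ← b.repr.map_eq_zero_iff]
  simp only [Finsupp.ext_iff, _root_.funext_iff, hcoord, Function.comp_apply, Finsupp.coe_zero,
    Pi.zero_apply, sub_eq_zero]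
  exact forall_congr' fun _ => eq_comm

end Graph

section Chart

variable {R σ ι κ : Type*} [CommRing R] [Fintype ι]

/-- Restriction of polynomial functions to the graph of `A`, with the free coordinates as
variables. -/
noncomputable def restrictToGraph (e : ι ⊕ κ ≃ σ) (A : Matrix κ ι R) :
    MvPolynomial σ R →ₐ[R] MvPolynomial ι R :=
  aeval (graphPoint e (A.map C) X)

/-- Evaluation of polynomial functions at the point with free coordinates `z` of a variable graph,
with the entries of its matrix as variables. -/
noncomputable def evalOnGraphs (e : ι ⊕ κ ≃ σ) (z : ι → R) :
    MvPolynomial σ R →ₐ[R] MvPolynomial (κ × ι) R :=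
  aeval (graphPoint e (Matrix.mvPolynomialX κ ι R) (C ∘ z))

section Equiv

variable (e : ι ⊕ κ ≃ σ) (A : Matrix κ ι R) (z : ι → R) (F : MvPolynomial σ R)

theorem eval_restrictToGraph : eval z (restrictToGraph e A F) = eval (graphPoint e A z) F := by
  have hA : (A.map C).map (eval z) = A := by ext a i; simp
  have hz : eval z ∘ X = z := by ext i; simp
  rw [restrictToGraph, eval_aeval_graphPoint, hA, hz]

theorem eval_evalOnGraphs :
    eval (Function.uncurry A) (evalOnGraphs e z F) = eval (graphPoint e A z) F := by
  have hA : (Matrix.mvPolynomialX κ ι R).map (eval (Function.uncurry A)) = A := by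
    ext a i
    simp [Function.uncurry]
  have hz : eval (Function.uncurry A) ∘ C ∘ z = z := by ext i; simp
  rw [evalOnGraphs, eval_aeval_graphPoint, hA, hz]

theorem restrictToGraph_surjective : Function.Surjective (restrictToGraph e A) := by
  intro f
  have hX : graphPoint e (A.map C) X ∘ e ∘ Sum.inl = (X : ι → MvPolynomial ι R) := by ext1 i; simp
  exact ⟨rename (e ∘ Sum.inl) f, by rw [restrictToGraph, aeval_rename, hX, aeval_X_left_apply]⟩

end Equiv

theorem restrictToGraph_eq_zero_iff [IsDomain R] [Infinite R] {e : ι ⊕ κ ≃ σ} {A : Matrix κ ι R}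
    {F : MvPolynomial σ R} :
    restrictToGraph e A F = 0 ↔ ∀ z, eval (graphPoint e A z) F = 0 := by
  simp only [MvPolynomial.funext_iff, eval_restrictToGraph, map_zero]

theorem isHomogeneous_restrictToGraph (e : ι ⊕ κ ≃ σ) (A : Matrix κ ι R)
    {F : MvPolynomial σ R} {n : ℕ} (hF : F.IsHomogeneous n) :
    (restrictToGraph e A F).IsHomogeneous n := by
  rw [← one_mul n]
  refine hF.aeval (graphPoint e (A.map C) X) fun j => ?_
  obtain ⟨i | a, rfl⟩ := e.surjective j
  · simpa only [graphPoint_inl] using isHomogeneous_X R i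
  · rw [graphPoint_inr]
    exact IsHomogeneous.sum _ _ _ fun i _ => isHomogeneous_C_mul_X _ i

theorem derivation_aeval_graphPoint [Fintype κ] {S : Type*} [CommRing S] [Algebra R S]
    (D : Derivation R S S) (e : ι ⊕ κ ≃ σ) (A : Matrix κ ι S) (z : ι → S) (F : MvPolynomial σ R) :
    D (aeval (graphPoint e A z) F) =
      ∑ i, aeval (graphPoint e A z) (pderiv (e (.inl i)) F) * D (z i) +
      ∑ a, aeval (graphPoint e A z) (pderiv (e (.inr a)) F) * D (A.mulVec z a) := by
  have := Fintype.ofEquiv _ e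
  simp only [derivation_aeval, ← e.sum_comp, Fintype.sum_sum_type, graphPoint_inl, graphPoint_inr]

theorem pderiv_restrictToGraph [Fintype κ] (e : ι ⊕ κ ≃ σ) (A : Matrix κ ι R)
    (F : MvPolynomial σ R) (i : ι) :
    pderiv i (restrictToGraph e A F) = restrictToGraph e A (pderiv (e (.inl i)) F) +
      ∑ a, restrictToGraph e A (pderiv (e (.inr a)) F) * C (A a i) := by
  classical
  have hA (a : κ) : pderiv i ((A.map C).mulVec X a) = C (A a i) := by
    simp [Matrix.mulVec, dotProduct, pderiv_X, Pi.single_apply]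
  simp only [restrictToGraph, derivation_aeval_graphPoint, hA]
  simp [pderiv_X, Pi.single_apply, -aeval_eq_bind₁]

theorem pderiv_evalOnGraphs [Finite κ] (e : ι ⊕ κ ≃ σ) (z : ι → R) (F : MvPolynomial σ R)
    (a : κ) (i : ι) :
    pderiv (a, i) (evalOnGraphs e z F) =
      evalOnGraphs e z (pderiv (e (.inr a)) F) * C (z i) := by
  classical
  have := Fintype.ofFinite κ
  have hX (b : κ) : pderiv (a, i) ((Matrix.mvPolynomialX κ ι R).mulVec (C ∘ z) b) =
      if b = a then C (z i) else 0 := by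
    simp [Matrix.mulVec, dotProduct, pderiv_X, Pi.single_apply, Prod.ext_iff, ite_and]
  simp only [evalOnGraphs, derivation_aeval_graphPoint, hX]
  simp [-aeval_eq_bind₁]

theorem gradientAt_evalOnGraphs_dotProduct [Fintype κ] (e : ι ⊕ κ ≃ σ) (A N : Matrix κ ι R)
    (z : ι → R) (F : MvPolynomial σ R) :
    gradientAt (Function.uncurry A) (evalOnGraphs e z F) ⬝ᵥ Function.uncurry N =
      ∑ a, eval (graphPoint e A z) (pderiv (e (.inr a)) F) * N.mulVec z a := by
  simp only [dotProduct, Fintype.sum_prod_type, gradientAt_apply, pderiv_evalOnGraphs, map_mul,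
    eval_evalOnGraphs, eval_C, Function.uncurry, Matrix.mulVec, Finset.mul_sum]
  exact Finset.sum_congr rfl fun a _ => Finset.sum_congr rfl fun i _ => by ring

end Chart

section Hypersurface

variable {R k σ ι : Type*} [CommRing R] [Field k]

/-- The ideal of the singular locus of the hypersurface `F = 0`, as in the Jacobian criterion. -/
noncomputable def jacobianIdeal (F : MvPolynomial σ R) : Ideal (MvPolynomial σ R) :=
  Ideal.span ({F} ∪ Set.range fun i => pderiv i F)

section Restriction

variable [Fintype ι]

theorem map_restrictToGraph_jacobianIdeal_le {κ : Type*} [Finite κ] {F : MvPolynomial σ R}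
    {e : ι ⊕ κ ≃ σ} {A : Matrix κ ι R} (hF : restrictToGraph e A F = 0)
    {g : MvPolynomial ι R} (hg : ∀ a, g ∣ restrictToGraph e A (pderiv (e (.inr a)) F)) :
    (jacobianIdeal F).map (restrictToGraph e A) ≤ Ideal.span {g} := by
  have := Fintype.ofFinite κ
  have hinl (i : ι) : restrictToGraph e A (pderiv (e (.inl i)) F) =
      -∑ a, restrictToGraph e A (pderiv (e (.inr a)) F) * C (A a i) := by
    rw [eq_neg_iff_add_eq_zero, ← pderiv_restrictToGraph, hF, map_zero]
  rw [jacobianIdeal, Ideal.map_span, Ideal.span_le, Set.image_subset_iff]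
  rintro f (rfl | ⟨j, rfl⟩)
  · simp [hF]
  obtain ⟨i | a, rfl⟩ := e.surjective j
  all_goals simp only [Set.mem_preimage, SetLike.mem_coe, Ideal.mem_span_singleton]
  · rw [hinl, dvd_neg]
    exact Finset.dvd_sum fun a _ => (hg a).mul_right _
  · exact hg a

variable {F : MvPolynomial σ k}

theorem isRelPrime_restrictToGraph_pderiv
    (hsing : ringKrullDim (MvPolynomial σ k ⧸ jacobianIdeal F) + 2 ≤ (Nat.card ι : WithBot ℕ∞))
    {e : ι ⊕ Fin 2 ≃ σ} {A : Matrix (Fin 2) ι k} (hA : restrictToGraph e A F = 0) :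
    IsRelPrime (restrictToGraph e A (pderiv (e (.inr 0)) F))
      (restrictToGraph e A (pderiv (e (.inr 1)) F)) := fun _ hg₀ hg₁ =>
  isUnit_of_map_le_span_singleton (φ := (restrictToGraph e A).toRingHom)
    (restrictToGraph_surjective e A) hsing
    (map_restrictToGraph_jacobianIdeal_le hA (Fin.forall_fin_two.2 ⟨hg₀, hg₁⟩))

theorem eq_zero_of_forall_sum_pderiv_mul_mulVec_eq_zero [Infinite k] {d : ℕ} (hd : 3 ≤ d)
    (hhom : F.IsHomogeneous d)
    (hsing : ringKrullDim (MvPolynomial σ k ⧸ jacobianIdeal F) + 2 ≤ (Nat.card ι : WithBot ℕ∞))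
    {e : ι ⊕ Fin 2 ≃ σ} {A N : Matrix (Fin 2) ι k} (hA : ∀ z, eval (graphPoint e A z) F = 0)
    (hN : ∀ z, ∑ a, eval (graphPoint e A z) (pderiv (e (.inr a)) F) * N.mulVec z a = 0) :
    N = 0 := by
  have hsyzygy : restrictToGraph e A (pderiv (e (.inr 0)) F) * N.toMvPolynomial 0 +
      restrictToGraph e A (pderiv (e (.inr 1)) F) * N.toMvPolynomial 1 = 0 :=
    MvPolynomial.funext fun z => by
      simpa [eval_restrictToGraph, Matrix.toMvPolynomial_eval_eq_apply] using hN z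
  have hpartial (a : Fin 2) := isHomogeneous_restrictToGraph e A (hhom.pderiv (i := e (.inr a)))
  have hlinear : ∀ a, N.toMvPolynomial a = 0 := Fin.forall_fin_two.2 <|
    eq_zero_of_isRelPrime_of_mul_add_mul_eq_zero
      (isRelPrime_restrictToGraph_pderiv hsing (restrictToGraph_eq_zero_iff.2 hA))
      (hpartial 0) (hpartial 1) (N.toMvPolynomial_isHomogeneous 0)
      (N.toMvPolynomial_isHomogeneous 1) (by omega) hsyzygy
  refine Matrix.mulVec_injective (_root_.funext fun z => _root_.funext fun a => ?_)
  rw [← Matrix.toMvPolynomial_eval_eq_apply, hlinear, map_zero, Matrix.zero_mulVec, Pi.zero_apply]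

theorem finite_matrices_forall_eval_graphPoint_eq_zero [Infinite k] {d : ℕ} (hd : 3 ≤ d)
    (hhom : F.IsHomogeneous d)
    (hsing : ringKrullDim (MvPolynomial σ k ⧸ jacobianIdeal F) + 2 ≤ (Nat.card ι : WithBot ℕ∞))
    (e : ι ⊕ Fin 2 ≃ σ) :
    {A : Matrix (Fin 2) ι k | ∀ z, eval (graphPoint e A z) F = 0}.Finite := by
  have hzeros : {p | ∀ f ∈ Set.range fun z => evalOnGraphs e z F, eval p f = 0}.Finite := by
    refine finite_zeros_of_forall_tangent_eq_zero fun p hp v hv => ?_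
    obtain ⟨A, rfl⟩ : ∃ A : Matrix (Fin 2) ι k, Function.uncurry A = p :=
      ⟨_, Function.uncurry_curry p⟩
    obtain ⟨N, rfl⟩ : ∃ N : Matrix (Fin 2) ι k, Function.uncurry N = v :=
      ⟨_, Function.uncurry_curry v⟩
    simp only [Set.forall_mem_range, eval_evalOnGraphs, gradientAt_evalOnGraphs_dotProduct]
      at hp hv
    rw [eq_zero_of_forall_sum_pderiv_mul_mulVec_eq_zero hd hhom hsing hp hv]
    rfl
  refine (hzeros.preimage
    (Function.LeftInverse.injective Function.curry_uncurry).injOn).subset fun A hA => ?_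
  rintro _ ⟨z, rfl⟩
  exact (eval_evalOnGraphs e A z F).trans (hA z)

end Restriction

theorem stmt_4_general [Fintype σ] {F : MvPolynomial σ k} {r d : ℕ} (hd : 3 ≤ d)
    (hσ : Fintype.card σ = r + 2) (hhom : F.IsHomogeneous d)
    (hsing : ringKrullDim (MvPolynomial σ k ⧸ jacobianIdeal F) + 2 ≤ (r : WithBot ℕ∞)) :
    {W : Submodule k (σ → k) | Module.finrank k W = r ∧ ∀ x ∈ W, eval x F = 0}.Finite := by
  cases finite_or_infinite k
  · exact Set.toFinite _
  have hcharts : (⋃ e : Fin r ⊕ Fin 2 ≃ σ,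
      coordGraph e '' {A | ∀ z, eval (graphPoint e A z) F = 0}).Finite :=
    Set.finite_iUnion fun e => .image _ <|
      finite_matrices_forall_eval_graphPoint_eq_zero hd hhom (by simpa using hsing) e
  refine hcharts.subset fun W ⟨hW, hWF⟩ => ?_
  obtain ⟨e, A, rfl⟩ :=
    exists_eq_coordGraph (ι := Fin r) (κ := Fin 2) W (by simpa using hW) (by simpa using hσ)
  exact Set.mem_iUnion.2 ⟨e, A, fun z => hWF _ (graphPoint_mem_coordGraph e A z), rfl⟩

end Hypersurface

/-- Proposition 8.3 of Salberger: an integral hypersurface `Z = {F = 0} ⊂ P^{r+1}` of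
degree `≥ 3` over an algebraically closed field of characteristic `0`, whose singular
locus has codimension at least three in `Z`, contains only finitely many `(r-1)`-planes.
The codimension condition is expressed by requiring that the coordinate ring of the
affine cone over the singular locus has Krull dimension at most `r - 2`, and
`(r-1)`-planes correspond to `r`-dimensional linear subspaces of `k^{r+2}` contained in
the affine cone of `Z`. -/
theorem stmt_4 (k : Type*) [Field k] [IsAlgClosed k] [CharZero k] (r : ℕ) (hr : 2 ≤ r)
    (d : ℕ) (hd : 3 ≤ d) (F : MvPolynomial (Fin (r + 2)) k)
    (hhom : F.IsHomogeneous d) (hirr : Irreducible F)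
    (hsing : ringKrullDim (MvPolynomial (Fin (r + 2)) k ⧸
        Ideal.span ({F} ∪ Set.range fun i => pderiv i F)) + 2 ≤ (r : WithBot ℕ∞)) :
    {W : Submodule k (Fin (r + 2) → k) |
      Module.finrank k W = r ∧ ∀ x ∈ W, eval x F = 0}.Finite :=
  stmt_4_general hd (Fintype.card_fin _) hhom hsing
end

section
/- Let p be a prime and let R be a commutative Noetherian local ring containing the ring ℤ_p of p-adic integers as a subring. Let A = R/pR, let m be the maximal ideal of A, and assume m^k ≠ m^{k+1} for every integer k ≥ 0 (in particular A ≠ 0). Let (n_i(A))_{i=1}^∞ be the non-decreasing sequence of non-negative integers in which each integer k ≥ 0 occurs exactly dim_{A/m}(m^k/m^{k+1}) times. Let r_1,…,r_s be elements of R and let φ_1,…,φ_s be ring homomorphisms from R to ℤ_p. Then the determinant of the s×s matrix (φ_i(r_j))_{1≤i,j≤s} is divisible in ℤ_p by p^{Λ(s)}, where Λ(s) = n_1(A) + n_2(A) + ⋯ + n_s(A). -/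
/-- The maximal ideal of `A = R/pR` (for `R` local with `A ≠ 0`), realised as the image
of the maximal ideal of `R`. -/
noncomputable def maxIdealModP (p : ℕ) (R : Type*) [CommRing R] [IsLocalRing R] :
    Ideal (R ⧸ Ideal.span {(p : R)}) :=
  (IsLocalRing.maximalIdeal R).map (Ideal.Quotient.mk (Ideal.span {(p : R)}))

/-- `dim_{A/m}(m^k/m^{k+1})` for `A = R/pR` and `m` its maximal ideal, realised as the
dimension over `A/m` of `(m^k)/(m·m^k)`. -/
noncomputable def gDimModP (p : ℕ) (R : Type*) [CommRing R] [IsLocalRing R] (k : ℕ) : ℕ :=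
  Module.finrank ((R ⧸ Ideal.span {(p : R)}) ⧸ maxIdealModP p R)
    ((↥(maxIdealModP p R ^ k)) ⧸
      (maxIdealModP p R • ⊤ :
        Submodule (R ⧸ Ideal.span {(p : R)}) ↥(maxIdealModP p R ^ k)))

/-!
A homomorphism `φ : R → ℤ_p` sends `M ^ k` into `p ^ k ℤ_p`, where `M` is the maximal ideal of `R`.
Lifting bases of the spaces `m ^ k / m ^ (k + 1)` to `M ^ k` gives `e i ∈ M ^ ν i` which span
`A / m ^ K`, using only the indices with `ν i < K`, for every `K`. Since `p` is nilpotent modulo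
`M ^ K`, this lifts to `R = ⟨e 0, …, e (s - 1)⟩ + M ^ ν s`. The determinant is multilinear in the
`r j`, so each `r j` may be taken to be some `e i` with `i < s` or to lie in `M ^ ν s`. Unless two
columns agree, the columns can then be matched bijectively with the indices `i < s` so that column
`i` is divisible by `p ^ ν i`.
-/

open Function IsLocalRing Submodule

section Determinant

theorem exists_perm_eq_or_mem {ι V : Type*} [Finite ι] {e v : ι → V} (hv : Injective v)
    {C : Set V} (h : ∀ j, v j ∈ Set.range e ∪ C) :
    ∃ σ : Equiv.Perm ι, ∀ j, v j = e (σ j) ∨ v j ∈ C := by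
  classical
  have := Fintype.ofFinite ι
  have : ∀ j, ∃ i, v j ∈ Set.range e → e i = v j := fun j => by
    by_cases hj : v j ∈ Set.range e
    · exact hj.imp fun _ hi _ => hi
    · exact ⟨j, fun hj' => absurd hj' hj⟩
  choose g hg using this
  have hinj : Set.InjOn g {j | v j ∈ Set.range e} := fun j hj j' hj' hjj' =>
    hv (by rw [← hg j hj, ← hg j' hj', hjj'])
  obtain ⟨σ, hσ⟩ := Set.MapsTo.exists_equiv_extend_of_card_eq (t := Finset.univ)
    Finset.card_univ.symm (fun _ _ => Finset.mem_coe.2 (Finset.mem_univ _)) hinj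
  refine ⟨σ.trans (Equiv.subtypeUnivEquiv Finset.mem_univ), fun j => (h j).imp_left fun hj => ?_⟩
  exact (hg j hj).symm.trans (congrArg e (hσ j hj).symm)

variable {O V S ι : Type*} [CommRing O] [CommRing S] [Algebra O S] [Fintype ι] [DecidableEq ι]

theorem prod_dvd_det_of_dvd {M : Matrix ι ι S} {d : ι → S} (h : ∀ i j, d j ∣ M i j) :
    ∏ j, d j ∣ M.det := by
  rw [Matrix.det_apply]
  exact Finset.dvd_sum fun σ _ =>
    (Finset.prod_dvd_prod_of_dvd _ _ fun j _ => h (σ j) j).trans (dvd_smul_of_dvd _ dvd_rfl)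

variable [AddCommGroup V] [Module O V]

theorem dvd_det_of_span_eq_top (φ : ι → V →ₗ[O] S) {T : Set V} (hT : span O T = ⊤) {d : S}
    (h : ∀ v : ι → V, (∀ j, v j ∈ T) → d ∣ (Matrix.of fun i j => φ i (v j)).det) (v : ι → V) :
    d ∣ (Matrix.of fun i j => φ i (v j)).det := by
  let detMap : MultilinearMap O (fun _ : ι => V) S :=
    (Matrix.detRowAlternating.toMultilinearMap.restrictScalars O).compLinearMap
      fun _ => LinearMap.pi φ
  have detMap_apply (v : ι → V) : detMap v = (Matrix.of fun i j => φ i (v j)).det :=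
    Matrix.det_transpose (Matrix.of fun i j => φ i (v j))
  -- Modulo `d` the determinant is a multilinear map vanishing on `T`, hence zero.
  have detMap_mod : (Ideal.Quotient.mkₐ O (Ideal.span {d})).toLinearMap.compMultilinearMap detMap
      = 0 := by
    refine MultilinearMap.ext_of_span_eq_top (g := fun _ => ((↑) : T → V))
      (by simpa using fun _ => hT)
      fun t => Ideal.Quotient.eq_zero_iff_dvd _ _ |>.2 ?_
    rw [detMap_apply]
    exact h _ fun j => (t j).2
  rw [← detMap_apply, ← Ideal.Quotient.eq_zero_iff_dvd]
  exact DFunLike.congr_fun detMap_mod v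

theorem pow_sum_dvd_det_of_filtration {F : ℕ → Submodule O V} (hF : Antitone F) {ϖ : S}
    {φ : ι → V →ₗ[O] S} (hφ : ∀ i k, ∀ x ∈ F k, ϖ ^ k ∣ φ i x) {w : ι → ℕ} {e : ι → V}
    (he : ∀ i, e i ∈ F (w i)) {c : ℕ} (hc : ∀ i, w i ≤ c)
    (hspan : span O (Set.range e) ⊔ F c = ⊤) (v : ι → V) :
    ϖ ^ ∑ i, w i ∣ (Matrix.of fun i j => φ i (v j)).det := by
  refine dvd_det_of_span_eq_top φ (T := Set.range e ∪ F c) (by rwa [span_union, span_eq])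
    (fun v hv => ?_) v
  by_cases hinj : Injective v
  · obtain ⟨σ, hσ⟩ := exists_perm_eq_or_mem hinj hv
    have hmem (j : ι) : v j ∈ F (w (σ j)) :=
      (hσ j).elim (fun h => h ▸ he (σ j)) fun h => hF (hc (σ j)) h
    rw [← Equiv.sum_comp σ, ← Finset.prod_pow_eq_pow_sum]
    exact prod_dvd_det_of_dvd fun i j => hφ i _ _ (hmem j)
  · obtain ⟨j, j', hv', hne⟩ := not_injective_iff.1 hinj
    rw [Matrix.det_zero_of_column_eq hne fun i => congrArg (φ i) hv']
    exact dvd_zero _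

end Determinant

section Spanning

theorem span_image_lt_sup_eq_top {O V ι : Type*} [Semiring O] [AddCommMonoid V] [Module O V]
    {F : ℕ → Submodule O V} (h0 : F 0 = ⊤) {w : ι → ℕ} {e : ι → V}
    (h : ∀ k, F k ≤ span O (e '' {i | w i = k}) ⊔ F (k + 1)) (K : ℕ) :
    span O (e '' {i | w i < K}) ⊔ F K = ⊤ := by
  induction K with
  | zero => simp [h0]
  | succ K ih =>
    have hsplit : {i | w i < K + 1} = {i | w i < K} ∪ {i | w i = K} := by
      ext i; exact Nat.lt_succ_iff_lt_or_eq
    rw [hsplit, Set.image_union, span_union, sup_assoc, eq_top_iff, ← ih]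
    exact sup_le_sup_left (h K) _

theorem sup_pow_smul_top_eq_top {O V : Type*} [CommSemiring O] [AddCommMonoid V] [Module O V]
    {I : Ideal O} {N : Submodule O V} (h : N ⊔ I • ⊤ = ⊤) (n : ℕ) : N ⊔ I ^ n • ⊤ = ⊤ := by
  induction n with
  | zero => simp
  | succ n ih =>
    rw [eq_top_iff]
    calc ⊤ = N ⊔ I • (N ⊔ I ^ n • ⊤) := by rw [ih, h]
      _ = N ⊔ (I • N ⊔ I ^ (n + 1) • ⊤) := by rw [smul_sup, pow_succ', mul_smul]
      _ ≤ N ⊔ I ^ (n + 1) • ⊤ := sup_le le_sup_left (sup_le_sup_right smul_le_right _)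

variable {O A : Type*} [CommRing O] [CommRing A] [Algebra O A] {m : Ideal A}

theorem exists_span_range_sup_smul_top_eq_top {N ι : Type*} [AddCommGroup N] [Module A N]
    [Module O N] [IsScalarTower O A N] [Module.Finite A N] [m.IsMaximal]
    (hO : Surjective (algebraMap O (A ⧸ m))) [Finite ι]
    (hcard : Nat.card ι = Module.finrank (A ⧸ m) (N ⧸ (m • ⊤ : Submodule A N))) :
    ∃ b : ι → N, span O (Set.range b) ⊔ (m • ⊤ : Submodule A N).restrictScalars O = ⊤ := by
  let _ := Ideal.Quotient.field m
  have : Module.Finite (A ⧸ m) (N ⧸ (m • ⊤ : Submodule A N)) :=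
    .of_restrictScalars_finite A _ _
  let basis := (Module.finBasisOfFinrankEq (A ⧸ m) (N ⧸ (m • ⊤ : Submodule A N)) hcard.symm).reindex
    (Finite.equivFin ι).symm
  choose b hb using fun i => (m • ⊤ : Submodule A N).mkQ_surjective (basis i)
  have hspan : span O (Set.range basis) = ⊤ := by
    rw [← Submodule.restrictScalars_span O (A ⧸ m) hO, basis.span_eq, restrictScalars_top]
  let π : N →ₗ[O] N ⧸ (m • ⊤ : Submodule A N) := (mkQ _).restrictScalars O
  have ker_π : π.ker = (m • ⊤ : Submodule A N).restrictScalars O := by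
    rw [LinearMap.ker_restrictScalars, ker_mkQ]
  refine ⟨b, ?_⟩
  rw [← ker_π, ← comap_map_eq, map_span, ← Set.range_comp, show π ∘ b = basis from funext hb,
    hspan, comap_top]

theorem map_subtype_pow_smul_top (m : Ideal A) (k : ℕ) :
    (m • ⊤ : Submodule A ↥(m ^ k)).map (m ^ k).subtype = m ^ (k + 1) := by
  rw [map_smul'', Submodule.map_top, range_subtype, smul_eq_mul, pow_succ']

theorem finrank_pow_quotient_pos [IsNoetherianRing A] [m.IsMaximal] {k : ℕ}
    (hne : m ^ k ≠ m ^ (k + 1)) :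
    0 < Module.finrank (A ⧸ m) (↥(m ^ k) ⧸ (m • ⊤ : Submodule A ↥(m ^ k))) := by
  let _ := Ideal.Quotient.field m
  have : Module.Finite (A ⧸ m) (↥(m ^ k) ⧸ (m • ⊤ : Submodule A ↥(m ^ k))) :=
    .of_restrictScalars_finite A _ _
  have : Nontrivial (↥(m ^ k) ⧸ (m • ⊤ : Submodule A ↥(m ^ k))) :=
    Submodule.Quotient.nontrivial_iff.2 fun h =>
      hne (by rw [← map_subtype_pow_smul_top, h, Submodule.map_top, range_subtype])
  exact Module.finrank_pos

theorem exists_pow_le_span_range_sup_pow_succ {ι : Type*} [Finite ι] [IsNoetherianRing A]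
    [m.IsMaximal] (hO : Surjective (algebraMap O (A ⧸ m))) {k : ℕ}
    (hcard : Nat.card ι = Module.finrank (A ⧸ m) (↥(m ^ k) ⧸ (m • ⊤ : Submodule A ↥(m ^ k)))) :
    ∃ b : ι → A, (∀ i, b i ∈ m ^ k) ∧ (m ^ k).restrictScalars O ≤
      span O (Set.range b) ⊔ (m ^ (k + 1)).restrictScalars O := by
  obtain ⟨b, hb⟩ := exists_span_range_sup_smul_top_eq_top hO hcard
  let incl : ↥(m ^ k) →ₗ[O] A := (m ^ k).subtype.restrictScalars O
  refine ⟨incl ∘ b, fun i => (b i).2, fun x hx => ?_⟩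
  have hx' : incl ⟨x, hx⟩ ∈ (span O (Set.range b) ⊔
      (m • ⊤ : Submodule A ↥(m ^ k)).restrictScalars O).map incl :=
    mem_map_of_mem (hb ▸ mem_top)
  rwa [Submodule.map_sup, map_span, ← Set.range_comp, ← restrictScalars_map,
    map_subtype_pow_smul_top] at hx'

theorem exists_family_span_image_sup_pow_eq_top {ι : Type*} [IsNoetherianRing A] [m.IsMaximal]
    (hO : Surjective (algebraMap O (A ⧸ m))) (hne : ∀ k, m ^ k ≠ m ^ (k + 1)) {w : ι → ℕ}
    (hcard : ∀ k, {i | w i = k}.ncard = Module.finrank (A ⧸ m)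
      (↥(m ^ k) ⧸ (m • ⊤ : Submodule A ↥(m ^ k)))) :
    ∃ e : ι → A, (∀ i, e i ∈ m ^ w i) ∧
      ∀ K, span O (e '' {i | w i < K}) ⊔ (m ^ K).restrictScalars O = ⊤ := by
  have finite_fiber (k : ℕ) : Finite {i | w i = k} :=
    Set.finite_of_ncard_pos (hcard k ▸ finrank_pow_quotient_pos (hne k))
  choose b hbm hb using fun k => exists_pow_le_span_range_sup_pow_succ (ι := {i | w i = k}) hO
    (hcard k)
  let e (i : ι) : A := b (w i) ⟨i, rfl⟩
  have range_subset (k : ℕ) : Set.range (b k) ⊆ e '' {i | w i = k} := by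
    rintro _ ⟨⟨i, rfl⟩, rfl⟩
    exact ⟨i, rfl, rfl⟩
  exact ⟨e, fun _ => hbm _ _, span_image_lt_sup_eq_top (by simp) fun k =>
    (hb k).trans (sup_le_sup_right (span_mono (range_subset k)) _)⟩

theorem sup_pow_eq_top_of_map_sup_pow_eq_top {R : Type*} [CommRing R] [Algebra O R] {I : Ideal O}
    {M : Ideal R} (hIM : I.map (algebraMap O R) ≤ M) {q : R →ₐ[O] A} (hq : Surjective q)
    (hker : RingHom.ker q = I.map (algebraMap O R)) {N : Submodule O R} {K : ℕ}
    (h : N.map q.toLinearMap ⊔ ((M.map q) ^ K).restrictScalars O = ⊤) :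
    N ⊔ (M ^ K).restrictScalars O = ⊤ := by
  have map_pow : ((M.map q) ^ K).restrictScalars O =
      ((M ^ K).restrictScalars O).map q.toLinearMap := by
    ext x
    rw [← Ideal.map_pow]
    exact Ideal.mem_map_iff_of_surjective q hq
  have sup_smul_top : (N ⊔ (M ^ K).restrictScalars O) ⊔ I • ⊤ = ⊤ := by
    have ker_q : q.toLinearMap.ker = I • ⊤ := by
      rw [Ideal.smul_top_eq_map, ← hker]; rfl
    rw [← ker_q, ← comap_map_eq, Submodule.map_sup, ← map_pow, h, comap_top]
  have pow_smul_top_le : I ^ K • ⊤ ≤ (M ^ K).restrictScalars O := by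
    rw [Ideal.smul_top_eq_map, Ideal.map_pow]
    exact Ideal.pow_right_mono hIM K
  rw [← sup_pow_smul_top_eq_top sup_smul_top K, sup_assoc, sup_eq_left.2 pow_smul_top_le]

end Spanning

section LocalRing

variable {O R : Type*} [CommRing O] [CommRing R] [IsLocalRing R] [Algebra O R] {p : ℕ}

theorem isMaximal_maxIdealModP (hp : (p : R) ∈ maximalIdeal R) : (maxIdealModP p R).IsMaximal :=
  .map_of_surjective_of_ker_le Ideal.Quotient.mk_surjective <| by
    rwa [Ideal.mk_ker, Ideal.span_singleton_le_iff_mem]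

theorem algebraMap_quotient_maxIdealModP_surjective
    (hO : Surjective (algebraMap O (ResidueField R))) :
    Surjective (algebraMap O ((R ⧸ Ideal.span {(p : R)}) ⧸ maxIdealModP p R)) := by
  let toQuot : ResidueField R →ₐ[O] (R ⧸ Ideal.span {(p : R)}) ⧸ maxIdealModP p R :=
    Ideal.quotientMapₐ _ (Ideal.Quotient.mkₐ O (Ideal.span {(p : R)})) Ideal.le_comap_map
  have toQuot_surjective : Surjective toQuot :=
    Ideal.quotientMap_surjective (H := Ideal.le_comap_map) Ideal.Quotient.mk_surjective
  rw [← toQuot.comp_algebraMap]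
  exact toQuot_surjective.comp hO

theorem exists_family_span_image_sup_maximalIdeal_pow_eq_top {ι : Type*} [IsNoetherianRing R]
    (hp : (p : R) ∈ maximalIdeal R) (hO : Surjective (algebraMap O (ResidueField R)))
    (hne : ∀ k, maxIdealModP p R ^ k ≠ maxIdealModP p R ^ (k + 1)) {w : ι → ℕ}
    (hcard : ∀ k, {i | w i = k}.ncard = gDimModP p R k) :
    ∃ e : ι → R, (∀ i, e i ∈ maximalIdeal R ^ w i) ∧
      ∀ K, span O (e '' {i | w i < K}) ⊔ (maximalIdeal R ^ K).restrictScalars O = ⊤ := by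
  have := isMaximal_maxIdealModP hp
  obtain ⟨b, hbm, hb⟩ := exists_family_span_image_sup_pow_eq_top
    (algebraMap_quotient_maxIdealModP_surjective hO) hne hcard
  let q := Ideal.Quotient.mkₐ O (Ideal.span {(p : R)})
  have hq : Surjective q := Ideal.Quotient.mk_surjective
  have map_pow (k : ℕ) : (maximalIdeal R ^ k).map q = maxIdealModP p R ^ k := Ideal.map_pow _ _ _
  have exists_lift (i : ι) : ∃ x ∈ maximalIdeal R ^ w i, q x = b i := by
    rw [← Ideal.mem_map_iff_of_surjective q hq, map_pow]
    exact hbm i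
  choose e hem heb using exists_lift
  refine ⟨e, hem, fun K => sup_pow_eq_top_of_map_sup_pow_eq_top (I := Ideal.span {(p : O)})
    (q := q) ?_ hq ?_ ?_⟩
  · simpa [Ideal.map_span, Ideal.span_singleton_le_iff_mem] using hp
  · rw [Ideal.map_span, Set.image_singleton, map_natCast]
    exact Ideal.mk_ker
  · rw [map_span, ← Set.image_comp, show q.toLinearMap ∘ e = b from funext heb]
    exact hb K

variable {S : Type*} [CommRing S] [IsLocalRing S] [Algebra O S]

theorem comap_maximalIdeal_eq_of_algebraMap_surjective
    (hO : Surjective (algebraMap O (ResidueField S))) (φ : R →ₐ[O] S) :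
    (maximalIdeal S).comap φ = maximalIdeal R := by
  let ψ : R →ₐ[O] ResidueField S := (IsScalarTower.toAlgHom O S (ResidueField S)).comp φ
  have hψ : Surjective ψ := fun y => (hO y).elim fun c hc => ⟨algebraMap O R c, by simp [hc]⟩
  have ker_ψ : RingHom.ker ψ = (maximalIdeal S).comap φ := by
    ext x
    exact residue_eq_zero_iff (φ x)
  rw [← ker_ψ]
  exact eq_maximalIdeal (RingHom.ker_isMaximal_of_surjective ψ hψ)

theorem algebraMap_residueField_surjective_of_algHom
    (hO : Surjective (algebraMap O (ResidueField S))) (φ : R →ₐ[O] S) :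
    Surjective (algebraMap O (ResidueField R)) := by
  intro y
  obtain ⟨x, rfl⟩ := residue_surjective y
  obtain ⟨c, hc⟩ := hO (residue S (φ x))
  refine ⟨c, ?_⟩
  change residue R (algebraMap O R c) = _
  change residue S (algebraMap O S c) = _ at hc
  rw [← sub_eq_zero, ← map_sub, residue_eq_zero_iff] at hc ⊢
  rwa [← comap_maximalIdeal_eq_of_algebraMap_surjective hO φ, Ideal.mem_comap, map_sub,
    φ.commutes]

theorem pow_dvd_algHom_apply_of_mem_maximalIdeal_pow {ϖ : S} (hS : maximalIdeal S = Ideal.span {ϖ})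
    (hO : Surjective (algebraMap O (ResidueField S))) (φ : R →ₐ[O] S) {k : ℕ} {x : R}
    (hx : x ∈ maximalIdeal R ^ k) : ϖ ^ k ∣ φ x := by
  rw [← Ideal.mem_span_singleton, ← Ideal.span_singleton_pow, ← hS]
  rw [← comap_maximalIdeal_eq_of_algebraMap_surjective hO φ] at hx
  exact Ideal.le_comap_pow φ k hx

end LocalRing

theorem algebraMap_int_residueField_padicInt_surjective (p : ℕ) [Fact p.Prime] :
    Surjective (algebraMap ℤ (ResidueField ℤ_[p])) := by
  have h : Surjective ((PadicInt.residueField (p := p)).symm.toRingHom.comp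
      (Int.castRingHom (ZMod p))) :=
    PadicInt.residueField.symm.surjective.comp (ZMod.ringHom_surjective _)
  rwa [RingHom.eq_intCast' (RingHom.comp _ _)] at h

theorem stmt_7_general (p : ℕ) {O R S : Type*} [CommRing O] [CommRing R] [IsNoetherianRing R]
    [IsLocalRing R] [Algebra O R] [CommRing S] [IsLocalRing S] [Algebra O S]
    (hS : maximalIdeal S = Ideal.span {(p : S)})
    (hO : Surjective (algebraMap O (ResidueField S)))
    (hne : ∀ k : ℕ, maxIdealModP p R ^ k ≠ maxIdealModP p R ^ (k + 1))
    {ν : ℕ → ℕ} (hmono : Monotone ν)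
    (hcard : ∀ k : ℕ, {i : ℕ | ν i = k}.ncard = gDimModP p R k)
    (s : ℕ) (a : Fin s → R) (φ : Fin s → R →ₐ[O] S) :
    (p : S) ^ (∑ i ∈ Finset.range s, ν i) ∣ (Matrix.of fun i j : Fin s => φ i (a j)).det := by
  obtain rfl | hs := Nat.eq_zero_or_pos s
  · simp
  let φ₀ : R →ₐ[O] S := φ ⟨0, hs⟩
  have hp : (p : R) ∈ maximalIdeal R := by
    rw [← comap_maximalIdeal_eq_of_algebraMap_surjective hO φ₀, Ideal.mem_comap, map_natCast, hS]
    exact Ideal.mem_span_singleton_self _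
  obtain ⟨e, he, hspan⟩ := exists_family_span_image_sup_maximalIdeal_pow_eq_top hp
    (algebraMap_residueField_surjective_of_algHom hO φ₀) hne hcard
  have image_subset : e '' {i | ν i < ν s} ⊆ Set.range fun i : Fin s => e i := by
    rintro _ ⟨i, hi, rfl⟩
    exact ⟨⟨i, hmono.reflect_lt hi⟩, rfl⟩
  rw [← Fin.sum_univ_eq_sum_range]
  exact pow_sum_dvd_det_of_filtration (F := fun k => (maximalIdeal R ^ k).restrictScalars O)
    (φ := fun i => (φ i).toLinearMap) (fun _ _ h => Ideal.pow_le_pow_right h)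
    (fun i _ _ hx => pow_dvd_algHom_apply_of_mem_maximalIdeal_pow hS hO (φ i) hx)
    (fun i => he i) (fun i => hmono i.2.le)
    (top_le_iff.1 (hspan (ν s) ▸ sup_le_sup_right (span_mono image_subset) _)) a

/-- Lemma 2.4 of Salberger: let `R` be a commutative Noetherian local ring containing
`ℤ_p` as a subring, `A = R/pR` with maximal ideal `m` satisfying `m^k ≠ m^{k+1}` for all
`k`, and let `(n_i(A))_{i≥1}` (here `ν 0, ν 1, …`) be the non-decreasing sequence in
which each `k ≥ 0` occurs exactly `dim_{A/m}(m^k/m^{k+1})` times.  Then for any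
`r_1, …, r_s ∈ R` and ring homomorphisms `φ_1, …, φ_s : R → ℤ_p`, the determinant
`det(φ_i(r_j))` is divisible by `p^{Λ(s)}` with `Λ(s) = n_1(A) + ⋯ + n_s(A)`. -/
theorem stmt_7 (p : ℕ) [Fact p.Prime] (R : Type*) [CommRing R] [IsNoetherianRing R]
    [IsLocalRing R] [Algebra ℤ_[p] R]
    (hsub : Function.Injective (algebraMap ℤ_[p] R))
    (hne : ∀ k : ℕ, maxIdealModP p R ^ k ≠ maxIdealModP p R ^ (k + 1))
    (ν : ℕ → ℕ) (hmono : Monotone ν)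
    (hcard : ∀ k : ℕ, {i : ℕ | ν i = k}.ncard = gDimModP p R k)
    (s : ℕ) (a : Fin s → R) (φ : Fin s → (R →+* ℤ_[p])) :
    (p : ℤ_[p]) ^ (∑ i ∈ Finset.range s, ν i) ∣
      (Matrix.of fun i j : Fin s => φ i (a j)).det := by
  exact stmt_7_general p (O := ℤ) PadicInt.maximalIdeal_eq_span_p
    (algebraMap_int_residueField_padicInt_surjective p) hne hmono hcard s a
    fun i => (φ i).toIntAlgHom
end

section
/- Let n ≥ 2, d ≥ 1 and ε > 0. There exists a constant C = C(d,n,ε) with the following property. Let F ∈ ℤ[x_0,…,x_n] be a primitive homogeneous polynomial of degree d which is irreducible over ℚ, defining X = {F = 0} ⊂ P^n, and set r = n−1. Let < be a graded monomial ordering on the monomials in x_0,…,x_n, let x_0^{α_0}⋯x_n^{α_n} be the leading monomial of F, and set a_m = (d−α_m)/(nd) for 0 ≤ m ≤ n. Let B_0,…,B_n ≥ 1 be reals, let p_1,…,p_t be distinct primes, and for each i let P_i ∈ P^n(𝔽_{p_i}) be a point on the reduction X_{p_i} of multiplicity μ_i ≥ 1, and suppose that p_1^{(d/μ_1)^{1/r}}⋯p_t^{(d/μ_t)^{1/r}}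 ≥ (B_0^{a_0}⋯B_n^{a_n})^{(r+1)/r}·(B_0⋯B_n)^ε. Then there exists a homogeneous polynomial G ∈ ℚ[x_0,…,x_n] of degree at most C which is not divisible by F and which vanishes at every rational point of X representable by a primitive integer tuple (x_0,…,x_n) with |x_m| ≤ B_m for all m whose reduction mod p_i equals P_i for every i. -/
open MvPolynomial

/-- `v` reduces mod `p` to the same point of `P^n(𝔽_p)` as the integer tuple `ξ`. -/
def ReducesTo {n : ℕ} (p : ℕ) (ξ : Fin n → ℤ) (v : Fin n → ZMod p) : Prop :=
  ∃ c : ZMod p, c ≠ 0 ∧ (fun i => ((ξ i : ZMod p))) = c • v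

/-- The point of `P^n(𝔽_p)` represented by `v` has multiplicity `μ` on the reduction
`X_p = {F ≡ 0 (mod p)}`. -/
def MultiplicityAt {n : ℕ} (p : ℕ) (F : MvPolynomial (Fin n) ℤ) (v : Fin n → ZMod p)
    (μ : ℕ) : Prop :=
  (∀ j < μ, homogeneousComponent j
      (bind₁ (fun i => C (v i) + X i) (MvPolynomial.map (Int.castRingHom (ZMod p)) F)) = 0) ∧
  homogeneousComponent μ
      (bind₁ (fun i => C (v i) + X i) (MvPolynomial.map (Int.castRingHom (ZMod p)) F)) ≠ 0

/-!
The determinant method. Let `x^α` be the leading monomial of `F` and consider the matrix of values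
of the monomials of degree `k` outside `(x^α)` at a family of the given points. If all such square
matrices are singular, some nonzero combination of these monomials vanishes at all the points; it
is not divisible by `F`, because the leading monomial of a multiple of `F` lies in `(x^α)`.

Otherwise take such a matrix with nonzero determinant. At `p = p_i`, dehomogenise and rescale so
that the points become `w + pη` with `w` a lift of `P_i`. The Taylor expansion of `F` at `w` has a
unit coefficient of degree at most `μ_i`, and the relation it provides expresses each row through
few vectors `p^|β| b^β`, so that a high power of `p` divides the determinant. Comparing the product
of these prime powers with the trivial upper bound for the determinant, and using the hypothesis on
`∏ p_i^((d/μ_i)^(1/r))`, bounds all `B_m` in terms of `d`, `n` and `ε`. For bounded `B_m` there are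
fewer points than monomials once `k` is large, and the determinants vanish again.
-/

section WeightedRows

variable {R ι Y : Type*} [CommRing R] [Fintype ι] [DecidableEq ι] [Fintype Y] (π : R)

/- A repeated row kills the determinant, so each `y` is taken by at most one row. -/
theorem pow_dvd_det_smul_comp (J : ℕ) (wt : Y → ℕ) (w : Y → ι → R) (φ : ι → Y) :
    π ^ (Fintype.card ι * J - ∑ y, (J - wt y)) ∣
      (Matrix.of fun i j => π ^ wt (φ i) * w (φ i) j).det := by
  classical
  by_cases hφ : Function.Injective φ
  · have slack_le : ∑ i, (J - wt (φ i)) ≤ ∑ y, (J - wt y) := by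
      rw [← Finset.sum_image (g := φ) (f := fun y => J - wt y) hφ.injOn]
      exact Finset.sum_le_univ_sum_of_nonneg fun _ => Nat.zero_le _
    have total_weight : Fintype.card ι * J ≤ ∑ i, (J - wt (φ i)) + ∑ i, wt (φ i) := by
      rw [← Finset.sum_add_distrib, ← smul_eq_mul, ← Finset.card_univ]
      exact Finset.card_nsmul_le_sum _ _ _ fun _ _ => le_tsub_add
    have factor := Matrix.det_mul_column (fun i => π ^ wt (φ i)) (Matrix.of fun i => w (φ i))
    simp only [Matrix.of_apply, Finset.prod_pow_eq_pow_sum] at factor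
    rw [factor]
    exact (pow_dvd_pow π (by omega)).mul_right _
  · obtain ⟨a, b, hab, hne⟩ : ∃ a b, φ a = φ b ∧ a ≠ b := by
      simpa [Function.Injective] using hφ
    rw [Matrix.det_zero_of_row_eq hne (by ext j; simp [hab])]
    exact dvd_zero _

theorem pow_dvd_det_of_rows_mem_span (J : ℕ) (wt : Y → ℕ) (w : Y → ι → R) (M : Matrix ι ι R)
    (hM : ∀ i, M i ∈ Submodule.span R (Set.range fun y => π ^ wt y • w y)) :
    π ^ (Fintype.card ι * J - ∑ y, (J - wt y)) ∣ M.det := by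
  classical
  choose A hA using fun i => (Submodule.mem_span_range_iff_exists_fun R).1 (hM i)
  have expand : M.det = ∑ φ : ι → Y, (∏ i, A i (φ i)) *
      (Matrix.of fun i j => π ^ wt (φ i) * w (φ i) j).det := by
    have multilinear := (Matrix.detRowAlternating (n := ι) (R := R)).toMultilinearMap.map_sum
      fun i y => A i y • (π ^ wt y • w y)
    simp only [MultilinearMap.map_smul_univ _ _ fun _ => π ^ _ • w _, smul_eq_mul,
      hA] at multilinear
    exact multilinear
  rw [expand]
  exact Finset.dvd_sum fun φ _ => (pow_dvd_det_smul_comp π J wt w φ).mul_left _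

theorem pow_dvd_det_of_rows_mem_span_sup (J : ℕ) (wt : Y → ℕ) (w : Y → ι → R) (M : Matrix ι ι R)
    (hM : ∀ i, M i ∈ Submodule.span R (Set.range fun y => π ^ wt y • w y) ⊔
      Submodule.span R (Set.range fun j : ι => π ^ J • Pi.single j (1 : R))) :
    π ^ (Fintype.card ι * J - ∑ y, (J - wt y)) ∣ M.det := by
  have dvd := pow_dvd_det_of_rows_mem_span π J (Sum.elim wt fun _ : ι => J)
    (Sum.elim w fun j => Pi.single j 1) M fun i => by
      convert hM i
      rw [← Submodule.span_union, ← Set.Sum.elim_range]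
      congr 2
      ext (y | j) <;> rfl
  simpa only [Fintype.sum_sum_type, Sum.elim_inl, Sum.elim_inr, tsub_self,
    Finset.sum_const_zero, add_zero] using dvd

end WeightedRows

section LeadingExponent

theorem exists_uniqueAdd_of_isGreatest {M : Type*} [AddCommSemigroup M] [LinearOrder M]
    (hadd : ∀ a b c : M, a < b → a + c < b + c) {A B : Finset M} {a : M}
    (ha : IsGreatest (A : Set M) a) (hB : B.Nonempty) : ∃ b ∈ B, UniqueAdd A B a b := by
  have : AddRightStrictMono M := ⟨fun c a b h => hadd a b c h⟩
  have : AddLeftStrictMono M := ⟨fun c a b h => by simpa only [add_comm c] using hadd a b c h⟩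
  exact ⟨B.max' hB, B.max'_mem hB, fun x y hx hy h =>
    (add_eq_add_iff_eq_and_eq (ha.2 hx) (B.le_max' y hy)).1 h⟩

theorem not_dvd_of_forall_not_le {σ R : Type*} [CommRing R] [NoZeroDivisors R]
    {F G : MvPolynomial σ R} (lo : LinearOrder (σ →₀ ℕ))
    (hadd : ∀ α β γ : σ →₀ ℕ, lo.lt α β → lo.lt (α + γ) (β + γ))
    {α : σ →₀ ℕ} (hα : α ∈ F.support) (hmax : ∀ β ∈ F.support, lo.le β α)
    (hG : G ≠ 0) (hGα : ∀ β ∈ G.support, ¬ α ≤ β) : ¬ F ∣ G := by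
  rintro ⟨H, rfl⟩
  obtain ⟨β, hβ, unique⟩ := @exists_uniqueAdd_of_isGreatest _ _ lo hadd F.support H.support α
    ⟨hα, hmax⟩ (support_nonempty.2 (right_ne_zero_of_mul hG))
  refine hGα (α + β) (mem_support_iff.2 ?_) le_self_add
  exact (AddMonoidAlgebra.coeff_mul_add_of_uniqueAdd unique).trans_ne
    (mul_ne_zero (mem_support_iff.1 hα) (mem_support_iff.1 hβ))

end LeadingExponent

section MonomialMatrix

variable {σ : Type*} [Fintype σ]

/-- The matrix of values of the monomials with exponent in `A` at a family of points `ξ` indexed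
by `A`: rows correspond to monomials, columns to points. -/
def monomialMatrix {R : Type*} [CommRing R] (A : Finset (σ →₀ ℕ)) (ξ : A → σ → R) :
    Matrix A A R :=
  Matrix.of fun β j => ∏ m, ξ j m ^ β.1 m

theorem map_monomialMatrix {R S : Type*} [CommRing R] [CommRing S] (f : R →+* S)
    (A : Finset (σ →₀ ℕ)) (ξ : A → σ → R) :
    (monomialMatrix A ξ).map f = monomialMatrix A fun j m => f (ξ j m) := by
  ext β j
  simp only [monomialMatrix, Matrix.map_apply, Matrix.of_apply, map_prod, map_pow]

theorem map_det_monomialMatrix {R S : Type*} [CommRing R] [CommRing S] (f : R →+* S)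
    (A : Finset (σ →₀ ℕ)) (ξ : A → σ → R) [DecidableEq A] :
    f (monomialMatrix A ξ).det = (monomialMatrix A fun j m => f (ξ j m)).det := by
  rw [RingHom.map_det, RingHom.mapMatrix_apply, map_monomialMatrix]

theorem exists_supported_or_det_ne_zero {K : Type*} [Field K] (A : Finset (σ →₀ ℕ))
    [DecidableEq A] (S : Set (σ → K)) :
    (∃ G : MvPolynomial σ K, G ≠ 0 ∧ G.support ⊆ A ∧ ∀ x ∈ S, eval x G = 0) ∨
      ∃ x : A → σ → K, (∀ j, x j ∈ S) ∧ (monomialMatrix A x).det ≠ 0 := by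
  let values (x : σ → K) (β : A) : K := ∏ m, x m ^ β.1 m
  rcases (le_top (a := Submodule.span K (values '' S))).lt_or_eq with hspan | hspan
  · left
    obtain ⟨φ, hφ, hker⟩ := Submodule.exists_le_ker_of_lt_top _ hspan
    obtain ⟨c, rfl⟩ := (dotProductEquiv K A).surjective φ
    let G : MvPolynomial σ K := ∑ β : A, monomial β.1 (c β)
    have coeff_G (β : A) : coeff β.1 G = c β := by
      classical
      simp only [G, coeff_sum, coeff_monomial, Subtype.coe_inj, Finset.sum_ite_eq',
        Finset.mem_univ, if_true]
    have G_mem : G ∈ restrictSupport K (A : Set (σ →₀ ℕ)) :=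
      Submodule.sum_mem _ fun β _ => (monomial_mem_restrictSupport K).2 (.inl β.2)
    refine ⟨G, fun hG => hφ ?_, mod_cast (mem_restrictSupport_iff K).1 G_mem, fun x hx => ?_⟩
    · obtain rfl : c = 0 := funext fun β => by rw [← coeff_G, hG, coeff_zero, Pi.zero_apply]
      exact map_zero _
    · have dot_eq_zero := hker (Submodule.subset_span (Set.mem_image_of_mem values hx))
      simpa only [G, map_sum, eval_monomial, Finsupp.prod_pow, LinearMap.mem_ker,
        dotProductEquiv_apply_apply, dotProduct] using dot_eq_zero
  · right
    obtain ⟨f, hf, -, hfli⟩ := Submodule.exists_fun_fin_finrank_span_eq K (values '' S)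
    have hcard : Fintype.card A = Module.finrank K (Submodule.span K (values '' S)) := by
      rw [hspan, finrank_top, Module.finrank_fintype_fun_eq_card]
    choose x hx hxf using hf
    let e := Fintype.equivFinOfCardEq hcard
    refine ⟨fun j => x (e j), fun j => hx _, ?_⟩
    rw [← Matrix.det_transpose, ← isUnit_iff_ne_zero, ← Matrix.isUnit_iff_isUnit_det,
      ← Matrix.linearIndependent_rows_iff_isUnit]
    rwa [show (monomialMatrix A fun j => x (e j)).transpose.row = f ∘ e from
      funext fun j => hxf (e j), linearIndependent_equiv]

end MonomialMatrix

section Reduction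

/-- The exponents of degree less than `J` which are not divisible by `γ`. -/
noncomputable def staircase {τ : Type*} [Finite τ] (γ : τ →₀ ℕ) (J : ℕ) : Finset (τ →₀ ℕ) :=
  open Classical in {β ∈ (Finsupp.finite_of_degree_lt J).toFinset | ¬ γ ≤ β}

theorem mem_staircase {τ : Type*} [Finite τ] {γ β : τ →₀ ℕ} {J : ℕ} :
    β ∈ staircase γ J ↔ β.degree < J ∧ ¬ γ ≤ β := by
  simp only [staircase, Finset.mem_filter, Set.Finite.mem_toFinset, Set.mem_ofPred_eq]

variable {R A τ : Type*} [CommRing R] [CommRing A] [Algebra R A]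

theorem aeval_mem_of_forall_monomial_mem {a : τ → A} {T : Submodule R A}
    (hT : ∀ β, aeval a (monomial β (1 : R)) ∈ T) (q : MvPolynomial τ R) : aeval a q ∈ T := by
  rw [← support_sum_monomial_coeff q, map_sum]
  refine T.sum_mem fun β _ => ?_
  rw [← mul_one (coeff β q), ← smul_eq_mul, ← smul_monomial, map_smul]
  exact T.smul_mem _ (hT β)

theorem coeff_smul_aeval_monomial_add_mem {g : MvPolynomial τ R} {a : τ → A} (hga : aeval a g = 0)
    {T : Submodule R A} {γ δ : τ →₀ ℕ}
    (hT : ∀ β ≠ γ, coeff β g • aeval a (monomial (β + δ) (1 : R)) ∈ T) :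
    coeff γ g • aeval a (monomial (γ + δ) (1 : R)) ∈ T := by
  classical
  have expand : ∑ β ∈ insert γ g.support, coeff β g • aeval a (monomial (β + δ) (1 : R)) = 0 := by
    rw [Finset.sum_insert_of_eq_zero_if_notMem fun h => by
      rw [notMem_support_iff.1 h, zero_smul]]
    calc ∑ β ∈ g.support, coeff β g • aeval a (monomial (β + δ) (1 : R))
        = aeval a ((∑ β ∈ g.support, monomial β (coeff β g)) * monomial δ 1) := by
          simp only [Finset.sum_mul, monomial_mul, map_sum, mul_one, ← map_smul, smul_eq_mul]
      _ = 0 := by rw [support_sum_monomial_coeff, map_mul, hga, zero_mul]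
  rw [← Finset.add_sum_erase _ _ (Finset.mem_insert_self γ _)] at expand
  rw [eq_neg_of_add_eq_zero_left expand]
  exact T.neg_mem (T.sum_mem fun β hβ => hT β (Finset.ne_of_mem_erase hβ))

theorem aeval_smul_monomial (π : R) (b : τ → A) (β : τ →₀ ℕ) :
    aeval (π • b) (monomial β (1 : R)) = π ^ β.degree • aeval b (monomial β (1 : R)) := by
  simp only [aeval_monomial, map_one, one_mul, Pi.smul_apply, smul_pow, Finsupp.prod,
    Finset.prod_smul, Finset.prod_pow_eq_pow_sum, Finsupp.degree_apply]

variable [Finite τ] (m : MonomialOrder τ) {g : MvPolynomial τ R} {γ : τ →₀ ℕ} {J : ℕ}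

open scoped MonomialOrder

/- The relation `g(a) = 0` rewrites a multiple of `x^γ` in terms of larger monomials. -/
theorem aeval_mem_of_staircase_mem {a : τ → A} (hga : aeval a g = 0) (hγ : IsUnit (coeff γ g))
    {T : Submodule R A}
    (hlower : ∀ β, β ≺[m] γ → ∀ q : MvPolynomial τ R, coeff β g • aeval a q ∈ T)
    (hstair : ∀ β ∈ staircase γ J, aeval a (monomial β (1 : R)) ∈ T)
    (hdeg : ∀ β : τ →₀ ℕ, J ≤ β.degree → aeval a (monomial β (1 : R)) ∈ T)
    (q : MvPolynomial τ R) : aeval a q ∈ T := by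
  refine aeval_mem_of_forall_monomial_mem (fun β => ?_) q
  let bad : Set (τ →₀ ℕ) := {β | aeval a (monomial β (1 : R)) ∉ T}
  have bad_finite : bad.Finite := (Finsupp.finite_of_degree_lt J).subset fun β hβ =>
    lt_of_not_ge fun h => hβ (hdeg β h)
  by_contra hβ
  obtain ⟨β, β_bad, β_max⟩ := bad.exists_max_image m.toSyn bad_finite ⟨β, hβ⟩
  have β_lt : β.degree < J := lt_of_not_ge fun h => β_bad (hdeg β h)
  obtain ⟨δ, rfl⟩ : ∃ δ, β = γ + δ := le_iff_exists_add.1 <| by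
    by_contra h
    exact β_bad (hstair β (mem_staircase.2 ⟨β_lt, h⟩))
  refine β_bad ((T.smul_mem_iff_of_isUnit hγ).1 (coeff_smul_aeval_monomial_add_mem hga ?_))
  intro β' hβ'
  rcases lt_or_gt_of_ne (m.toSyn.injective.ne hβ') with h | h
  · exact hlower β' h _
  · refine T.smul_mem _ (by_contra fun h' => (β_max (β' + δ) h').not_gt ?_)
    simpa only [map_add, add_lt_add_iff_right] using h

theorem aeval_smul_mem_of_staircase_mem {π : R} {b : τ → A} (hgb : aeval (π • b) g = 0)
    (hγ : IsUnit (coeff γ g)) (hlower : ∀ β, β ≺[m] γ → π ∣ coeff β g) {T : Submodule R A}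
    (hstair : ∀ β ∈ staircase γ J, aeval (π • b) (monomial β (1 : R)) ∈ T)
    (hJ : ∀ x : A, π ^ J • x ∈ T) (q : MvPolynomial τ R) : aeval (π • b) q ∈ T := by
  have hdeg (β : τ →₀ ℕ) (hβ : J ≤ β.degree) : aeval (π • b) (monomial β (1 : R)) ∈ T := by
    rw [aeval_smul_monomial, ← Nat.sub_add_cancel hβ, pow_add, mul_smul]
    exact T.smul_mem _ (hJ _)
  have descend (i : ℕ) (hi : ∀ q : MvPolynomial τ R, π ^ i • aeval (π • b) q ∈ T) :
      aeval (π • b) q ∈ T := by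
    induction i with
    | zero => simpa only [pow_zero, one_smul] using hi q
    | succ i ih =>
      refine ih (aeval_mem_of_staircase_mem m (T := T.comap (LinearMap.lsmul R A (π ^ i))) hgb hγ
        (fun β hβ q => ?_) (fun β hβ => T.smul_mem _ (hstair β hβ))
        fun β hβ => T.smul_mem _ (hdeg β hβ))
      obtain ⟨c, hc⟩ := hlower β hβ
      simpa only [hc, Submodule.mem_comap, LinearMap.lsmul_apply, smul_smul, pow_succ, mul_comm c,
        mul_assoc] using T.smul_mem c (hi q)
  exact descend J fun q => hJ _

end Reduction

section Chart

theorem aeval_smul_of_isHomogeneous {R S A τ : Type*} [CommSemiring R] [CommSemiring A]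
    [Algebra R A] [CommSemiring S] [Algebra S A] {d : ℕ} {F : MvPolynomial τ R}
    (hF : F.IsHomogeneous d) (u : S) (x : τ → A) : aeval (u • x) F = u ^ d • aeval x F := by
  simp only [aeval_def, eval₂_eq, Finset.smul_sum, Pi.smul_apply]
  refine Finset.sum_congr rfl fun β hβ => ?_
  rw [Finset.prod_congr rfl fun i _ => smul_pow u (x i) (β i), Finset.prod_smul,
    Finset.prod_pow_eq_pow_sum, ← hF.degree_eq_sum_deg_support hβ, mul_smul_comm]

variable {σ R : Type*} [DecidableEq σ] [CommRing R]

/-- The Taylor expansion of a form at `w` in the affine chart `x_{m₀} = w_{m₀}`: the polynomial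
`F (w + t)` in the variables `t_m`, `m ≠ m₀`. -/
noncomputable def chartExpansion (m₀ : σ) (w : σ → R) :
    MvPolynomial σ R →ₐ[R] MvPolynomial {m // m ≠ m₀} R :=
  aeval fun m => C (w m) + if h : m ≠ m₀ then X ⟨m, h⟩ else 0

theorem aeval_chartExpansion {A : Type*} [CommRing A] [Algebra R A] (m₀ : σ) (w : σ → R)
    (t : σ → A) (ht : t m₀ = 0) (F : MvPolynomial σ R) :
    aeval (fun m : {m // m ≠ m₀} => t m) (chartExpansion m₀ w F) =
      aeval (fun m => algebraMap R A (w m) + t m) F := by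
  rw [chartExpansion, ← AlgHom.comp_apply, comp_aeval]
  congr 2 with m
  by_cases h : m = m₀ <;> simp [h, ht]

theorem map_chartExpansion {S : Type*} [CommRing S] (f : R →+* S) (m₀ : σ) (w : σ → R)
    (F : MvPolynomial σ R) :
    map f (chartExpansion m₀ w F) = chartExpansion m₀ (fun m => f (w m)) (map f F) := by
  induction F using MvPolynomial.induction_on with
  | C a => simp [chartExpansion]
  | add p q hp hq => simp [hp, hq]
  | mul_X p i hp =>
    rw [map_mul, map_mul, hp, map_mul, map_mul]
    by_cases h : i = m₀ <;> simp [chartExpansion, h]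

theorem aeval_mem_pow_of_mem_pow_idealOfVars {τ A : Type*} [CommRing A] [Algebra R A]
    {I : Ideal A} {s : τ → A} (hs : ∀ i, s i ∈ I) {k : ℕ} {G : MvPolynomial τ R}
    (hG : G ∈ idealOfVars τ R ^ k) : aeval s G ∈ I ^ k := by
  have map_le : (idealOfVars τ R).map (aeval s : MvPolynomial τ R →ₐ[R] A) ≤ I := by
    rw [Ideal.map_span, Ideal.span_le]
    rintro _ ⟨_, ⟨i, rfl⟩, rfl⟩
    simpa only [SetLike.mem_coe, aeval_X] using hs i
  refine Ideal.pow_right_mono map_le k ?_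
  rw [← Ideal.map_pow]
  exact Ideal.mem_map_of_mem _ hG

variable {m₀ : σ} {w : σ → R} {d k : ℕ} {F : MvPolynomial σ R}

/- By homogeneity `F (w + t) = u ^ d * F (w + s)`, with `u = 1 + t_{m₀} / w_{m₀}` and
`s_{m₀} = 0`. -/
theorem aeval_mem_pow_of_chartExpansion_mem {A : Type*} [CommRing A] [Algebra R A] {I : Ideal A}
    (hF : F.IsHomogeneous d) (hw : IsUnit (w m₀))
    (hFk : chartExpansion m₀ w F ∈ idealOfVars _ R ^ k) {t : σ → A} (ht : ∀ m, t m ∈ I)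
    (htm₀ : IsUnit (algebraMap R A (w m₀) + t m₀)) :
    aeval (fun m => algebraMap R A (w m) + t m) F ∈ I ^ k := by
  obtain ⟨u, hu⟩ : ∃ u : Aˣ, algebraMap R A (w m₀) + t m₀ = u * algebraMap R A (w m₀) := by
    obtain ⟨a, ha⟩ := hw.map (algebraMap R A)
    obtain ⟨b, hb⟩ := htm₀
    exact ⟨b * a⁻¹, by rw [← hb, ← ha, Units.val_mul, Units.inv_mul_cancel_right]⟩
  let s (m : σ) : A := ↑u⁻¹ * (algebraMap R A (w m) + t m) - algebraMap R A (w m)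
  have s_m₀ : s m₀ = 0 := by simp only [s, hu, Units.inv_mul_cancel_left, sub_self]
  have s_mem (m : σ) : s m ∈ I := by
    have hu' : (u - 1 : A) * algebraMap R A (w m₀) ∈ I := by
      rw [sub_one_mul, ← hu, add_sub_cancel_left]
      exact ht m₀
    have u_sub_one_mem := (Ideal.mul_unit_mem_iff_mem I (hw.map (algebraMap R A))).1 hu'
    have hs : s m = ↑u⁻¹ * (t m - (u - 1) * algebraMap R A (w m)) := by
      linear_combination algebraMap R A (w m) * u.inv_mul
    rw [hs]
    exact I.mul_mem_left _ (I.sub_mem (ht m) (I.mul_mem_right _ u_sub_one_mem))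
  have rescale : (fun m => algebraMap R A (w m) + t m) =
      (u : A) • fun m => algebraMap R A (w m) + s m := by
    ext m
    simp only [Pi.smul_apply, s, add_sub_cancel, smul_eq_mul, Units.mul_inv_cancel_left]
  rw [rescale, aeval_smul_of_isHomogeneous hF, ← aeval_chartExpansion m₀ w s s_m₀]
  exact (I ^ k).smul_of_tower_mem _ <|
    aeval_mem_pow_of_mem_pow_idealOfVars (s := fun m : {m // m ≠ m₀} => s m) (fun m => s_mem m) hFk

theorem aeval_add_X_mem_of_chartExpansion_mem (hF : F.IsHomogeneous d) (hw : IsUnit (w m₀))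
    (hFk : chartExpansion m₀ w F ∈ idealOfVars _ R ^ k) :
    aeval (fun m => C (w m) + X m) F ∈ idealOfVars σ R ^ k := by
  let I := idealOfVars σ R
  let mk := Ideal.Quotient.mkₐ R (I ^ k)
  have map_pow_eq_bot : I.map mk ^ k = ⊥ := by
    rw [← Ideal.map_pow]
    exact Ideal.map_quotient_self _
  have X_mem (m : σ) : mk (X m) ∈ I.map mk :=
    Ideal.mem_map_of_mem _ (Ideal.subset_span (Set.mem_range_self m))
  have X_nilpotent : IsNilpotent (mk (X m₀)) :=
    ⟨k, by simpa only [map_pow_eq_bot, Ideal.mem_bot] using Ideal.pow_mem_pow (X_mem m₀) k⟩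
  have image_mem := aeval_mem_pow_of_chartExpansion_mem hF hw hFk X_mem
    (X_nilpotent.isUnit_add_left_of_commute (hw.map _) (.all _ _))
  rw [map_pow_eq_bot, Ideal.mem_bot] at image_mem
  refine Ideal.Quotient.eq_zero_iff_mem.1 (Eq.trans ?_ image_mem)
  change mk (aeval _ F) = _
  rw [← AlgHom.comp_apply, comp_aeval]
  rfl

end Chart

section Multiplicity

open scoped MonomialOrder

variable {σ : Type*} [LinearOrder σ]

theorem exists_coeff_chartExpansion_ne_zero {K : Type*} [CommRing K] {F : MvPolynomial σ K} {d : ℕ}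
    (hF : F.IsHomogeneous d) {v : σ → K} {m₀ : σ} (hv : IsUnit (v m₀)) {μ : ℕ}
    (hμ : homogeneousComponent μ (aeval (fun m => C (v m) + X m) F) ≠ 0) :
    ∃ β : {m // m ≠ m₀} →₀ ℕ, β.degree ≤ μ ∧ coeff β (chartExpansion m₀ v F) ≠ 0 := by
  contrapose! hμ
  have hchart : chartExpansion m₀ v F ∈ idealOfVars _ K ^ (μ + 1) :=
    (mem_pow_idealOfVars_iff' _ _).2 fun β hβ => hμ β (Nat.lt_succ_iff.1 hβ)
  have htaylor :=
    (mem_pow_idealOfVars_iff' _ _).1 (aeval_add_X_mem_of_chartExpansion_mem hF hv hchart)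
  ext β
  rw [coeff_homogeneousComponent]
  split_ifs with h
  · exact htaylor β (h ▸ Nat.lt_succ_self _)
  · rfl

theorem exists_degLex_minimal_coeff_ne_zero {τ K : Type*} [LinearOrder τ] [WellFoundedGT τ]
    [CommSemiring K] {G : MvPolynomial τ K} {μ : ℕ}
    (hG : ∃ β : τ →₀ ℕ, β.degree ≤ μ ∧ coeff β G ≠ 0) :
    ∃ γ : τ →₀ ℕ, γ.degree ≤ μ ∧ coeff γ G ≠ 0 ∧
      ∀ β, β ≺[MonomialOrder.degLex] γ → coeff β G = 0 := by
  obtain ⟨β, hβμ, hβ⟩ := hG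
  obtain ⟨γ, hγ, hmin⟩ := G.support.exists_min_image (MonomialOrder.degLex (σ := τ)).toSyn
    ⟨β, mem_support_iff.2 hβ⟩
  refine ⟨γ, ?_, mem_support_iff.1 hγ, fun δ hδ => ?_⟩
  · exact (Finsupp.DegLex.monotone_degree (hmin β (mem_support_iff.2 hβ))).trans hβμ
  · by_contra h
    exact (hmin δ (mem_support_iff.2 h)).not_gt hδ

variable {R K : Type*} [CommRing R] [Field K] {φ : R →+* K}

theorem exists_isUnit_smul_eq_add [IsLocalHom φ] {π : R} (hker : RingHom.ker φ = Ideal.span {π})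
    {x w : σ → R} {c : K} (hc : c ≠ 0) (hx : ∀ m, φ (x m) = c * φ (w m)) {m₀ : σ}
    (hw : φ (w m₀) ≠ 0) :
    ∃ b : R, IsUnit b ∧ ∃ η : σ → R, η m₀ = 0 ∧ b • x = w + π • η := by
  obtain ⟨a, ha⟩ : IsUnit (x m₀) := .of_map φ _ (by rw [hx]; exact (mul_ne_zero hc hw).isUnit)
  have hw' : IsUnit (w m₀) := .of_map φ _ hw.isUnit
  let b := w m₀ * ↑a⁻¹
  have hbx : b * x m₀ = w m₀ := by rw [← ha, Units.inv_mul_cancel_right]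
  have hbc : φ b * c = 1 := mul_right_cancel₀ hw <| by
    rw [mul_assoc, ← hx, ← map_mul, hbx, one_mul]
  have hdvd (m : σ) : π ∣ b * x m - w m := by
    rw [← Ideal.mem_span_singleton, ← hker, RingHom.mem_ker, map_sub, map_mul, hx, ← mul_assoc,
      hbc, one_mul, sub_self]
  choose η hη using hdvd
  refine ⟨b, hw'.mul a⁻¹.isUnit, Function.update η m₀ 0, Function.update_self .., ?_⟩
  ext m
  rcases eq_or_ne m m₀ with rfl | h
  · simp [hbx]
  · simpa [h, sub_eq_iff_eq_add'] using hη m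

end Multiplicity

section Counting

variable {σ : Type*}

theorem card_finsuppAntidiag_of_card_eq_succ [DecidableEq σ] {s : Finset σ} {r : ℕ}
    (hs : s.card = r + 1) (k : ℕ) :
    (s.finsuppAntidiag k).card = (k + r).choose r := by
  rw [Finset.card_finsuppAntidiag_nat_eq_choose, hs, add_right_comm, Nat.add_sub_cancel,
    add_comm r, Nat.choose_symm_add]

theorem sum_finsuppAntidiag_apply_eq [DecidableEq σ] {s : Finset σ} (k : ℕ) {i m : σ}
    (hi : i ∈ s) (hm : m ∈ s) :
    ∑ β ∈ s.finsuppAntidiag k, β i = ∑ β ∈ s.finsuppAntidiag k, β m := by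
  have swap_mem (x : σ) : Equiv.swap i m x ∈ s ↔ x ∈ s := by
    rcases eq_or_ne x i with rfl | hxi
    · simp [hi, hm]
    · rcases eq_or_ne x m with rfl | hxm
      · simp [hi, hm]
      · rw [Equiv.swap_apply_of_ne_of_ne hxi hxm]
  refine Finset.sum_equiv (Finsupp.equivCongrLeft (Equiv.swap i m)) (fun β => ?_) fun β _ => ?_
  · simp only [Finset.mem_finsuppAntidiag, Finsupp.equivCongrLeft_apply,
      Finsupp.equivMapDomain_apply, Equiv.symm_swap, Finset.subset_iff, Finsupp.mem_support_iff]
    refine and_congr ?_ ?_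
    · rw [Finset.sum_equiv (Equiv.swap i m) (g := Finsupp.equivMapDomain (Equiv.swap i m) β)
        (fun x => (swap_mem x).symm) fun x _ => by simp [Finsupp.equivMapDomain_apply]]
    · rw [(Equiv.swap i m).forall_congr_left]
      simp [swap_mem]
  · simp [Finsupp.equivCongrLeft_apply, Finsupp.equivMapDomain_apply]

theorem card_mul_sum_finsuppAntidiag [DecidableEq σ] {s : Finset σ} (k : ℕ) {m : σ} (hm : m ∈ s) :
    s.card * ∑ β ∈ s.finsuppAntidiag k, β m = k * (s.finsuppAntidiag k).card := by
  calc s.card * ∑ β ∈ s.finsuppAntidiag k, β m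
      = ∑ i ∈ s, ∑ β ∈ s.finsuppAntidiag k, β i := by
        rw [Finset.sum_congr rfl fun i hi => sum_finsuppAntidiag_apply_eq k hi hm,
          Finset.sum_const, smul_eq_mul]
    _ = ∑ β ∈ s.finsuppAntidiag k, ∑ i ∈ s, β i := Finset.sum_comm
    _ = k * (s.finsuppAntidiag k).card := by
        rw [Finset.sum_congr rfl fun β hβ => (Finset.mem_finsuppAntidiag.1 hβ).1,
          Finset.sum_const, smul_eq_mul, mul_comm]

theorem sum_comp_le_sum_of_injOn {ι : Type*} {s : Finset ι} {t : Finset σ} {e : ι → σ}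
    (he : Set.MapsTo e s t) (hinj : Set.InjOn e s) (f : σ → ℕ) :
    ∑ i ∈ s, f (e i) ≤ ∑ j ∈ t, f j := by
  classical
  exact (Finset.sum_image hinj).symm.trans_le <|
    Finset.sum_le_sum_of_subset (Finset.image_subset_iff.2 fun _ hi => he hi)

theorem erase_injOn (i : σ) (c : ℕ) :
    Set.InjOn (Finsupp.erase i) {β : σ →₀ ℕ | β i = c} := by
  intro β₁ h₁ β₂ h₂ h
  rw [← Finsupp.single_add_erase i β₁, ← Finsupp.single_add_erase i β₂, h, h₁.out, h₂.out]

variable [Fintype σ]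

theorem sum_not_le_le_sum_slices (s : Finset (σ →₀ ℕ)) (γ : σ →₀ ℕ) (f : (σ →₀ ℕ) → ℕ) :
    ∑ β ∈ s with ¬ γ ≤ β, f β ≤ ∑ i, ∑ c ∈ Finset.range (γ i), ∑ β ∈ s with β i = c, f β := by
  calc ∑ β ∈ s with ¬ γ ≤ β, f β
      ≤ ∑ β ∈ s, ∑ i, ∑ c ∈ Finset.range (γ i), if β i = c then f β else 0 := by
        rw [Finset.sum_filter]
        refine Finset.sum_le_sum fun β _ => ?_
        by_cases h : γ ≤ β
        · rw [if_neg (not_not.2 h)]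
          exact Nat.zero_le _
        · obtain ⟨i, hi⟩ : ∃ i, β i < γ i := by simpa [Finsupp.le_def] using h
          rw [if_pos h]
          refine le_trans ?_ (Finset.single_le_sum (fun _ _ => Nat.zero_le _) (Finset.mem_univ i))
          rw [Finset.sum_ite_eq, if_pos (Finset.mem_range.2 hi)]
    _ = ∑ i, ∑ c ∈ Finset.range (γ i), ∑ β ∈ s with β i = c, f β := by
        simp only [Finset.sum_filter, Finset.sum_comm (s := s)]

/- Raising the `i`-th exponent fills `β` up to degree `J - 1`, so that symmetry applies. -/
theorem sum_slice_degree_lt_le {r : ℕ} (hσ : Fintype.card σ = r + 1) (i : σ) (c J : ℕ) :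
    ∑ β ∈ (Finsupp.finite_of_degree_lt J).toFinset with β i = c, (J - Finsupp.degree β) ≤
      (J + r).choose (r + 1) := by
  classical
  rcases J with _ | J
  · simp
  let fill (β : σ →₀ ℕ) : σ →₀ ℕ := β + Finsupp.single i (J - β.degree)
  have fill_apply (β : σ →₀ ℕ) : fill β i = β i + (J - β.degree) := by simp [fill]
  have fill_injOn : Set.InjOn fill {β | β i = c} := by
    intro β₁ h₁ β₂ h₂ h
    have slack_eq : J - β₁.degree = J - β₂.degree := by
      have := DFunLike.congr_fun h i
      rw [fill_apply, fill_apply, h₁.out, h₂.out] at this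
      exact Nat.add_left_cancel this
    simpa only [fill, slack_eq, add_left_inj] using h
  have fill_mem (β : σ →₀ ℕ) (hβ : β.degree < J + 1) :
      fill β ∈ Finset.univ.finsuppAntidiag J := by
    rw [Finset.mem_finsuppAntidiag, ← Finsupp.degree_eq_sum, map_add, Finsupp.degree_single]
    exact ⟨by omega, Finset.subset_univ _⟩
  have hcard := card_finsuppAntidiag_of_card_eq_succ (s := Finset.univ) (k := J) hσ
  have hsymm := card_mul_sum_finsuppAntidiag J (Finset.mem_univ i)
  rw [hcard, Finset.card_univ, hσ] at hsymm
  calc _ ≤ ∑ β ∈ (Finsupp.finite_of_degree_lt (J + 1)).toFinset with β i = c, (fill β i + 1) :=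
        Finset.sum_le_sum fun β _ => by rw [fill_apply]; omega
    _ ≤ ∑ β ∈ Finset.univ.finsuppAntidiag J, (β i + 1) := by
        refine sum_comp_le_sum_of_injOn (e := fill) (fun β hβ => fill_mem β ?_)
          (fill_injOn.mono fun β hβ => (Finset.mem_filter.1 hβ).2) fun β => β i + 1
        simpa using (Finset.mem_filter.1 hβ).1
    _ = (J + 1 + r).choose (r + 1) := by
        refine Nat.eq_of_mul_eq_mul_left r.succ_pos ?_
        rw [Finset.sum_add_distrib, Finset.sum_const, hcard, mul_add, hsymm, smul_eq_mul,
          Nat.succ_eq_add_one, mul_comm _ ((J + 1 + r).choose _), add_right_comm J,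
          ← Nat.add_one_mul_choose_eq]
        ring

theorem sum_staircase_le {r : ℕ} (hσ : Fintype.card σ = r + 1) (γ : σ →₀ ℕ) (J : ℕ) :
    ∑ β ∈ staircase γ J, (J - β.degree) ≤ γ.degree * (J + r).choose (r + 1) := by
  calc ∑ β ∈ staircase γ J, (J - β.degree)
      = ∑ β ∈ (Finsupp.finite_of_degree_lt J).toFinset with ¬ γ ≤ β, (J - β.degree) := by
        rw [staircase]
    _ ≤ ∑ i, ∑ _ ∈ Finset.range (γ i), (J + r).choose (r + 1) :=
        (sum_not_le_le_sum_slices _ γ _).trans <| Finset.sum_le_sum fun i _ =>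
          Finset.sum_le_sum fun c _ => sum_slice_degree_lt_le hσ i c J
    _ = γ.degree * (J + r).choose (r + 1) := by
        simp only [Finset.sum_const, Finset.card_range, smul_eq_mul, ← Finset.sum_mul,
          Finsupp.degree_eq_sum]

variable [DecidableEq σ]

/-- The exponents of degree `k` which are not divisible by `α`. -/
def standardMonomials (α : σ →₀ ℕ) (k : ℕ) : Finset (σ →₀ ℕ) :=
  {β ∈ Finset.univ.finsuppAntidiag k | ¬ α ≤ β}

theorem mem_standardMonomials {α β : σ →₀ ℕ} {k : ℕ} :
    β ∈ standardMonomials α k ↔ β.degree = k ∧ ¬ α ≤ β := by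
  simp only [standardMonomials, Finset.mem_filter, Finset.mem_finsuppAntidiag,
    Finsupp.degree_eq_sum, Finset.subset_univ, and_true]

theorem choose_le_card_standardMonomials_add {n k : ℕ} (hσ : Fintype.card σ = n + 1) (α : σ →₀ ℕ)
    (hk : α.degree ≤ k) :
    (k + n).choose n ≤ (standardMonomials α k).card + (k - α.degree + n).choose n := by
  rw [← card_finsuppAntidiag_of_card_eq_succ (s := (Finset.univ : Finset σ)) hσ,
    ← card_finsuppAntidiag_of_card_eq_succ (s := (Finset.univ : Finset σ)) hσ,
    ← Finset.card_filter_add_card_filter_not (s := Finset.univ.finsuppAntidiag k) (¬ α ≤ ·),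
    standardMonomials]
  have of_le {β : σ →₀ ℕ}
      (hβ : β ∈ {β ∈ (Finset.univ : Finset σ).finsuppAntidiag k | ¬ ¬ α ≤ β}) :
      β.degree = k ∧ β - α + α = β := by
    simp only [Finset.mem_filter, not_not, Finset.mem_finsuppAntidiag,
      ← Finsupp.degree_eq_sum] at hβ
    exact ⟨hβ.1.1, tsub_add_cancel_of_le hβ.2⟩
  refine Nat.add_le_add_left (Finset.card_le_card_of_injOn (· - α) (fun β hβ => ?_) ?_) _
  · obtain ⟨hdeg, hβ⟩ := of_le hβ
    rw [← hβ, map_add] at hdeg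
    simp only [SetLike.mem_coe, Finset.mem_finsuppAntidiag, ← Finsupp.degree_eq_sum,
      Finset.subset_univ, and_true]
    omega
  · intro β₁ h₁ β₂ h₂ (h : β₁ - α = β₂ - α)
    rw [← (of_le h₁).2, h, (of_le h₂).2]

theorem card_standardMonomials_le {n : ℕ} (hσ : Fintype.card σ = n + 1) (α : σ →₀ ℕ) (k : ℕ) :
    (standardMonomials α k).card ≤ (k + n).choose n :=
  (Finset.card_filter_le _ _).trans_eq (card_finsuppAntidiag_of_card_eq_succ hσ k)

theorem mul_choose_add_choose_le (m r d : ℕ) :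
    d * m.choose r + m.choose (r + 1) ≤ (m + d).choose (r + 1) := by
  induction d with
  | zero => simp
  | succ d ih =>
    have mono : m.choose r ≤ (m + d).choose r := Nat.choose_le_choose r (Nat.le_add_right m d)
    rw [← add_assoc, Nat.choose_succ_succ', add_one_mul]
    omega

theorem mul_choose_le_card_standardMonomials {r k : ℕ} (hσ : Fintype.card σ = r + 2) (α : σ →₀ ℕ)
    (hk : α.degree ≤ k) :
    α.degree * (k - α.degree + (r + 1)).choose r ≤ (standardMonomials α k).card := by
  have hcard := choose_le_card_standardMonomials_add hσ α hk
  have hchoose := mul_choose_add_choose_le (k - α.degree + (r + 1)) r α.degree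
  rw [add_right_comm, Nat.sub_add_cancel hk] at hchoose
  omega

theorem erase_mapsTo_finsuppAntidiag (i : σ) (c k : ℕ) :
    Set.MapsTo (Finsupp.erase i) {β ∈ (Finset.univ : Finset σ).finsuppAntidiag k | β i = c}
      ((Finset.univ.erase i).finsuppAntidiag (k - c)) := by
  intro β hβ
  obtain ⟨hdeg, rfl⟩ : ∑ j, β j = k ∧ β i = c := by simpa using hβ
  rw [← Finset.add_sum_erase _ _ (Finset.mem_univ i)] at hdeg
  rw [SetLike.mem_coe, Finset.mem_finsuppAntidiag, Finsupp.support_erase, ← hdeg,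
    Nat.add_sub_cancel_left]
  exact ⟨Finset.sum_congr rfl fun j hj => Finsupp.erase_ne (Finset.ne_of_mem_erase hj),
    Finset.erase_subset_erase _ (Finset.subset_univ _)⟩

theorem sum_slice_comp_erase_le (i : σ) (c k : ℕ) (f : (σ →₀ ℕ) → ℕ) :
    ∑ β ∈ Finset.univ.finsuppAntidiag k with β i = c, f (β.erase i) ≤
      ∑ β ∈ (Finset.univ.erase i).finsuppAntidiag (k - c), f β :=
  sum_comp_le_sum_of_injOn (by simpa using erase_mapsTo_finsuppAntidiag i c k)
    ((erase_injOn i c).mono fun β hβ => (Finset.mem_filter.1 hβ).2) f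

theorem card_univ_erase {n : ℕ} (hσ : Fintype.card σ = n + 1) (i : σ) :
    (Finset.univ.erase i).card = n := by
  rw [Finset.card_erase_of_mem (Finset.mem_univ i), Finset.card_univ, hσ, Nat.add_sub_cancel]

theorem card_slice_le {r : ℕ} (hσ : Fintype.card σ = r + 2) (i : σ) (c k : ℕ) :
    {β ∈ (Finset.univ : Finset σ).finsuppAntidiag k | β i = c}.card ≤ (k + r).choose r := by
  calc _ ≤ ((Finset.univ.erase i).finsuppAntidiag (k - c)).card := by
        simpa using sum_slice_comp_erase_le i c k 1
    _ ≤ (k + r).choose r := by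
        rw [card_finsuppAntidiag_of_card_eq_succ (card_univ_erase hσ i)]
        exact Nat.choose_le_choose r (by omega)

theorem mul_sum_slice_le {r : ℕ} (hσ : Fintype.card σ = r + 2) {i m : σ} (him : m ≠ i)
    (c k : ℕ) :
    (r + 1) * ∑ β ∈ Finset.univ.finsuppAntidiag k with β i = c, β m ≤ k * (k + r).choose r := by
  calc _ ≤ (r + 1) * ∑ β ∈ (Finset.univ.erase i).finsuppAntidiag (k - c), β m := by
        refine Nat.mul_le_mul_left _ ?_
        simpa only [Finsupp.erase_ne him] using sum_slice_comp_erase_le i c k (· m)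
    _ = (k - c) * (k - c + r).choose r := by
        rw [← card_univ_erase hσ i, card_mul_sum_finsuppAntidiag _ (by simpa using him),
          card_finsuppAntidiag_of_card_eq_succ (card_univ_erase hσ i)]
    _ ≤ k * (k + r).choose r :=
        Nat.mul_le_mul (Nat.sub_le k c) (Nat.choose_le_choose r (by omega))

theorem mul_sum_standardMonomials_le {r : ℕ} (hσ : Fintype.card σ = r + 2) (α : σ →₀ ℕ)
    (m : σ) (k : ℕ) : (r + 1) * ∑ β ∈ standardMonomials α k, β m ≤
      ((α.degree - α m) * k + (r + 1) * α.degree ^ 2) * (k + r).choose r := by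
  have hdeg : α.degree - α m = ∑ i ∈ Finset.univ.erase m, α i := by
    rw [Finsupp.degree_eq_sum, ← Finset.add_sum_erase _ _ (Finset.mem_univ m),
      Nat.add_sub_cancel_left]
  have main_slice : ∑ c ∈ Finset.range (α m),
      ∑ β ∈ Finset.univ.finsuppAntidiag k with β m = c, β m ≤ α.degree ^ 2 * (k + r).choose r := by
    calc _ ≤ ∑ _ ∈ Finset.range (α m), α m * (k + r).choose r := by
          refine Finset.sum_le_sum fun c hc => ?_
          rw [Finset.sum_congr rfl fun β hβ => (Finset.mem_filter.1 hβ).2, Finset.sum_const,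
            smul_eq_mul, mul_comm]
          exact Nat.mul_le_mul (Finset.mem_range.1 hc).le (card_slice_le hσ m c k)
      _ ≤ α.degree ^ 2 * (k + r).choose r := by
          rw [Finset.sum_const, Finset.card_range, smul_eq_mul, ← mul_assoc, ← sq]
          gcongr
          exact Finsupp.le_degree m α
  calc (r + 1) * ∑ β ∈ standardMonomials α k, β m
      ≤ (r + 1) * ∑ i, ∑ c ∈ Finset.range (α i),
          ∑ β ∈ Finset.univ.finsuppAntidiag k with β i = c, β m :=
        Nat.mul_le_mul_left _ (sum_not_le_le_sum_slices _ α _)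
    _ ≤ (r + 1) * (α.degree ^ 2 * (k + r).choose r) +
          ∑ i ∈ Finset.univ.erase m, α i * (k * (k + r).choose r) := by
        rw [← Finset.add_sum_erase _ _ (Finset.mem_univ m), mul_add,
          Finset.mul_sum (Finset.univ.erase m)]
        refine Nat.add_le_add (Nat.mul_le_mul_left _ main_slice) (Finset.sum_le_sum fun i hi => ?_)
        rw [Finset.mul_sum]
        refine (Finset.sum_le_card_nsmul _ _ (k * (k + r).choose r) fun c _ => ?_).trans_eq ?_
        · exact mul_sum_slice_le hσ (Finset.ne_of_mem_erase hi).symm c k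
        · rw [Finset.card_range, smul_eq_mul]
    _ = ((α.degree - α m) * k + (r + 1) * α.degree ^ 2) * (k + r).choose r := by
        rw [← Finset.sum_mul, ← hdeg]
        ring

end Counting

section LocalDivisibility

variable {σ : Type*} [Fintype σ]

theorem det_monomialMatrix_smul {R : Type*} [CommRing R] {A : Finset (σ →₀ ℕ)} [DecidableEq A]
    {k : ℕ} (hA : ∀ β ∈ A, β.degree = k) (b : A → R) (ξ : A → σ → R) :
    (monomialMatrix A fun j => b j • ξ j).det = (∏ j, b j ^ k) * (monomialMatrix A ξ).det := by
  rw [← Matrix.det_mul_row]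
  congr 1
  ext β j
  simp only [monomialMatrix, Matrix.of_apply, Pi.smul_apply, smul_eq_mul, mul_pow,
    Finset.prod_mul_distrib, Finset.prod_pow_eq_pow_sum, ← hA β β.2, Finsupp.degree_eq_sum]

theorem exists_aeval_eq_monomialMatrix {R : Type*} [CommRing R] (A : Finset (σ →₀ ℕ))
    {m₀ : σ} (w : σ → R) (η : A → σ → R) (hη : ∀ j, η j m₀ = 0) (β : A) :
    ∃ q : MvPolynomial {m // m ≠ m₀} R, monomialMatrix A (fun j => w + η j) β =
      aeval (fun (m : {m // m ≠ m₀}) j => η j m) q := by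
  classical
  refine ⟨chartExpansion m₀ w (monomial β.1 1), ?_⟩
  rw [aeval_chartExpansion m₀ w (fun m j => η j m) (funext hη), aeval_monomial, Finsupp.prod_pow]
  ext j
  simp [monomialMatrix]

theorem pow_dvd_det_of_mem_range_aeval {R ι τ : Type*} [CommRing R] [Fintype ι] [DecidableEq ι]
    [Finite τ] (m : MonomialOrder τ) {π : R} {g : MvPolynomial τ R} {γ : τ →₀ ℕ}
    (hγ : IsUnit (coeff γ g)) (hlower : ∀ β, m.toSyn β < m.toSyn γ → π ∣ coeff β g)
    {b : τ → ι → R} (hgb : aeval (π • b) g = 0) {M : Matrix ι ι R}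
    (hM : ∀ i, ∃ q : MvPolynomial τ R, M i = aeval (π • b) q) (J : ℕ) :
    π ^ (Fintype.card ι * J - ∑ β ∈ staircase γ J, (J - β.degree)) ∣ M.det := by
  rw [← Finset.sum_coe_sort]
  refine pow_dvd_det_of_rows_mem_span_sup π J (fun β : staircase γ J => β.1.degree)
    (fun β => aeval b (monomial β.1 (1 : R))) M fun i => ?_
  obtain ⟨q, hq⟩ := hM i
  rw [hq]
  refine aeval_smul_mem_of_staircase_mem m hgb hγ hlower (J := J) (fun β hβ => ?_) (fun x => ?_) q
  · rw [aeval_smul_monomial]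
    exact Submodule.mem_sup_left (Submodule.subset_span ⟨⟨β, hβ⟩, rfl⟩)
  · refine Submodule.mem_sup_right ?_
    rw [pi_eq_sum_univ' x, Finset.smul_sum]
    refine Submodule.sum_mem _ fun j _ => ?_
    rw [smul_comm]
    exact Submodule.smul_mem _ _ (Submodule.subset_span ⟨j, rfl⟩)

variable [LinearOrder σ] {R K : Type*} [CommRing R] [Field K] {φ : R →+* K} [IsLocalHom φ]

theorem pow_dvd_det_monomialMatrix_of_aeval {m₀ : σ} {A : Finset (σ →₀ ℕ)} [DecidableEq A] {π : R}
    (hker : RingHom.ker φ = Ideal.span {π}) {F : MvPolynomial σ R} {γ : {m // m ≠ m₀} →₀ ℕ}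
    {w : σ → R} (hγ : coeff γ (chartExpansion m₀ (fun m => φ (w m)) (map φ F)) ≠ 0)
    (hlower : ∀ β, MonomialOrder.degLex.toSyn β < MonomialOrder.degLex.toSyn γ →
      coeff β (chartExpansion m₀ (fun m => φ (w m)) (map φ F)) = 0)
    {η : A → σ → R} (hη : ∀ j, η j m₀ = 0) (hF : ∀ j, eval (w + π • η j) F = 0) (J : ℕ) :
    π ^ (A.card * J - ∑ β ∈ staircase γ J, (J - β.degree)) ∣
      (monomialMatrix A fun j => w + π • η j).det := by
  let b (m : {m // m ≠ m₀}) (j : A) : R := η j m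
  have hcoeff (β) : φ (coeff β (chartExpansion m₀ w F)) =
      coeff β (chartExpansion m₀ (fun m => φ (w m)) (map φ F)) := by
    rw [← map_chartExpansion, coeff_map]
  have hroot : aeval (π • b) (chartExpansion m₀ w F) = 0 := by
    refine (aeval_chartExpansion m₀ w (fun m (j : A) => π * η j m)
      (funext fun j => by simp [hη]) F).trans (funext fun j => ?_)
    refine (comp_aeval_apply _ (Pi.evalAlgHom R (fun _ : A => R) j) F).trans ?_
    rw [Pi.zero_apply, ← hF j]
    rfl
  rw [← Fintype.card_coe A]
  refine pow_dvd_det_of_mem_range_aeval MonomialOrder.degLex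
    (.of_map φ _ (by rw [hcoeff]; exact hγ.isUnit)) (fun β hβ => ?_) hroot
    (fun β => exists_aeval_eq_monomialMatrix A w (fun j => π • η j) (fun j => by simp [hη]) β) J
  rw [← Ideal.mem_span_singleton, ← hker, RingHom.mem_ker, hcoeff, hlower β hβ]

theorem pow_dvd_det_monomialMatrix (hφ : Function.Surjective φ) {π : R}
    (hker : RingHom.ker φ = Ideal.span {π}) {r : ℕ} (hσ : Fintype.card σ = r + 2)
    {F : MvPolynomial σ R} {d : ℕ} (hF : F.IsHomogeneous d) {v : σ → K} (hv : v ≠ 0) {μ : ℕ}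
    (hμ : homogeneousComponent μ (aeval (fun m => C (v m) + X m) (map φ F)) ≠ 0)
    {A : Finset (σ →₀ ℕ)} [DecidableEq A] {k : ℕ} (hA : ∀ β ∈ A, β.degree = k) {ξ : A → σ → R}
    (hξ : ∀ j, ∃ c : K, c ≠ 0 ∧ (fun m => φ (ξ j m)) = c • v) (hξF : ∀ j, eval (ξ j) F = 0)
    (J : ℕ) :
    π ^ (A.card * J - μ * (J + r).choose (r + 1)) ∣ (monomialMatrix A ξ).det := by
  obtain ⟨m₀, hm₀⟩ := Function.ne_iff.1 hv
  choose w hw using fun m => hφ (v m)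
  obtain rfl : (fun m => φ (w m)) = v := funext hw
  obtain ⟨γ, hγμ, hγ, hlower⟩ := exists_degLex_minimal_coeff_ne_zero
    (exists_coeff_chartExpansion_ne_zero (hF.map φ) (Ne.isUnit hm₀) hμ)
  choose c hc hξ using hξ
  have hξ' (j : A) (m : σ) : φ (ξ j m) = c j * φ (w m) := congrFun (hξ j) m
  choose b hb η hη hbξ using fun j => exists_isUnit_smul_eq_add hker (hc j) (hξ' j) hm₀
  have hroot (j : A) : eval (w + π • η j) F = 0 := by
    rw [← hbξ, ← aeval_eq_eval, aeval_smul_of_isHomogeneous hF, aeval_eq_eval, hξF, smul_zero]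
  have hτ : Fintype.card {m // m ≠ m₀} = r + 1 := by
    rw [Fintype.card_subtype_compl, Fintype.card_subtype_eq, hσ]
    rfl
  have hexp : ∑ β ∈ staircase γ J, (J - β.degree) ≤ μ * (J + r).choose (r + 1) :=
    (sum_staircase_le hτ γ J).trans (Nat.mul_le_mul_right _ hγμ)
  have hdvd := pow_dvd_det_monomialMatrix_of_aeval hker hγ hlower hη hroot J
  simp only [← hbξ] at hdvd
  rw [det_monomialMatrix_smul hA] at hdvd
  have hunit : IsUnit (∏ j, b j ^ k) := IsUnit.prod_univ_iff.2 fun j => (hb j).pow k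
  exact (pow_dvd_pow π (by omega)).trans (hunit.dvd_mul_left.1 hdvd)

end LocalDivisibility

theorem prime_pow_dvd_det_monomialMatrix {r d p k μ : ℕ} (hp : p.Prime)
    {F : MvPolynomial (Fin (r + 2)) ℤ} (hF : F.IsHomogeneous d) {v : Fin (r + 2) → ZMod p}
    (hv : v ≠ 0) (hμ : MultiplicityAt p F v μ) {A : Finset (Fin (r + 2) →₀ ℕ)}
    (hA : ∀ β ∈ A, β.degree = k) {ξ : A → Fin (r + 2) → ℤ} (hξ : ∀ j, ReducesTo p (ξ j) v)
    (hξF : ∀ j, eval (ξ j) F = 0) (J : ℕ) :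
    (p : ℤ) ^ (A.card * J - μ * (J + r).choose (r + 1)) ∣ (monomialMatrix A ξ).det := by
  have := Fact.mk hp
  have map_comp : (PadicInt.toZMod (p := p)).comp (Int.castRingHom ℤ_[p]) =
      Int.castRingHom (ZMod p) := RingHom.ext_int _ _
  have hker : RingHom.ker (PadicInt.toZMod (p := p)) = Ideal.span {(p : ℤ_[p])} :=
    PadicInt.ker_toZMod.trans PadicInt.maximalIdeal_eq_span_p
  rw [← PadicInt.pow_p_dvd_int_iff, ← eq_intCast (Int.castRingHom ℤ_[p]), map_det_monomialMatrix]
  refine pow_dvd_det_monomialMatrix (F := map (Int.castRingHom ℤ_[p]) F)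
    (ZMod.ringHom_surjective _) hker (Fintype.card_fin _) (hF.map _) hv ?_ hA
    (fun j => ?_) (fun j => ?_) J
  · rw [map_map, map_comp]
    exact hμ.2
  · simpa [ReducesTo] using hξ j
  · exact (map_eval _ (ξ j) F).symm.trans (by rw [hξF, map_zero])

section Asymptotics

/-- The degree `k` is so large that replacing `k - d` by `k + r + d + 1` in a polynomial of degree
`r + 1` costs at most a factor `1 + δ`: this absorbs all lower order terms in the counts of
monomials of degree `k`. -/
def IsAdmissibleDegree (r d : ℕ) (δ : ℝ) (k : ℕ) : Prop :=
  d < k ∧ ((k : ℝ) + r + d + 1) ^ (r + 1) ≤ (1 + δ) * ((k : ℝ) - d) ^ (r + 1)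

theorem exists_isAdmissibleDegree (r d : ℕ) {δ : ℝ} (hδ : 0 < δ) :
    ∃ k, IsAdmissibleDegree r d δ k := by
  have tendsto_one : Filter.Tendsto (fun m : ℕ => (1 + ((r : ℝ) + 2 * d + 1) / m) ^ (r + 1))
      Filter.atTop (nhds 1) := by
    simpa only [add_zero, one_pow] using
      ((tendsto_const_div_atTop_nhds_zero_nat ((r : ℝ) + 2 * d + 1)).const_add 1).pow (r + 1)
  have eventually_le := tendsto_one.eventually (eventually_le_nhds (lt_add_of_pos_right 1 hδ))
  obtain ⟨m, hm, hm1⟩ := (eventually_le.and (Filter.eventually_ge_atTop 1)).exists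
  have hm0 : (0 : ℝ) < m := by exact_mod_cast hm1
  refine ⟨m + d, by omega, ?_⟩
  rw [Nat.cast_add, add_sub_cancel_right]
  calc ((m : ℝ) + d + r + d + 1) ^ (r + 1)
      = (1 + ((r : ℝ) + 2 * d + 1) / m) ^ (r + 1) * m ^ (r + 1) := by
        rw [← mul_pow, one_add_mul, div_mul_cancel₀ _ hm0.ne']
        ring
    _ ≤ (1 + δ) * m ^ (r + 1) := by gcongr

variable {r d k : ℕ} {δ : ℝ}

theorem IsAdmissibleDegree.add_pow_mul_le (hk : IsAdmissibleDegree r d δ k) (hδ : 0 < δ) :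
    ((k : ℝ) + r) ^ r * (k + d) ≤ (1 + δ) * (k * (k - d) ^ r) := by
  have hdk : (0 : ℝ) < k - d := sub_pos.2 (by exact_mod_cast hk.1)
  have hkr : (k : ℝ) + r ≤ k + r + d + 1 := by linarith [d.cast_nonneg (α := ℝ)]
  have hkd : (k : ℝ) + d ≤ k + r + d + 1 := by linarith [r.cast_nonneg (α := ℝ)]
  calc ((k : ℝ) + r) ^ r * (k + d) ≤ ((k : ℝ) + r + d + 1) ^ r * (k + r + d + 1) :=
        mul_le_mul (pow_le_pow_left₀ (by positivity) hkr r) hkd (by positivity) (by positivity)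
    _ = ((k : ℝ) + r + d + 1) ^ (r + 1) := (pow_succ _ _).symm
    _ ≤ (1 + δ) * ((k : ℝ) - d) ^ (r + 1) := hk.2
    _ = (1 + δ) * ((k - d) * (k - d) ^ r) := by rw [pow_succ']
    _ ≤ (1 + δ) * (k * (k - d) ^ r) := by
        gcongr
        exact sub_le_self _ d.cast_nonneg

variable {σ : Type*} [Fintype σ] [DecidableEq σ] {α : σ →₀ ℕ}

theorem mul_sub_pow_le_card_mul_factorial (hσ : Fintype.card σ = r + 2) (hk : α.degree ≤ k) :
    (α.degree : ℝ) * ((k : ℝ) - α.degree) ^ r ≤ (standardMonomials α k).card * r.factorial := by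
  have hchoose : ((k : ℝ) - α.degree) ^ r ≤
      (k - α.degree + (r + 1)).choose r * (r.factorial : ℝ) := by
    rw [← div_le_iff₀ (by positivity), ← Nat.cast_sub hk]
    refine le_trans ?_ (Nat.pow_le_choose (α := ℝ) r _)
    exact div_le_div_of_nonneg_right
      (pow_le_pow_left₀ (Nat.cast_nonneg _) (Nat.cast_le.2 (by omega)) _) (by positivity)
  have hcard :
      (α.degree * (k - α.degree + (r + 1)).choose r : ℝ) ≤ (standardMonomials α k).card := by
    exact_mod_cast mul_choose_le_card_standardMonomials hσ α hk
  calc (α.degree : ℝ) * ((k : ℝ) - α.degree) ^ r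
      ≤ α.degree * ((k - α.degree + (r + 1)).choose r * (r.factorial : ℝ)) := by gcongr
    _ ≤ (standardMonomials α k).card * r.factorial := by rw [← mul_assoc]; gcongr

theorem IsAdmissibleDegree.mul_pow_le (hk : IsAdmissibleDegree r d δ k) (hδ : 0 < δ) {x : ℝ}
    (hx : x ≤ (r + 1) * d) :
    (x * k + (r + 1) * d ^ 2) * (k + r) ^ r ≤ k * (k - d) ^ r * (x + (r + 1) * d * δ) := by
  have hdk : (d : ℝ) < k := by exact_mod_cast hk.1
  have hpow : ((k : ℝ) - d) ^ r ≤ ((k : ℝ) + r) ^ r :=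
    pow_le_pow_left₀ (by linarith)
      (by linarith [r.cast_nonneg (α := ℝ), d.cast_nonneg (α := ℝ)]) r
  have hadm := mul_le_mul_of_nonneg_left (hk.add_pow_mul_le hδ)
    (show (0 : ℝ) ≤ (r + 1) * d by positivity)
  have hgap := mul_nonneg (mul_nonneg k.cast_nonneg (sub_nonneg.2 hx)) (sub_nonneg.2 hpow)
  linarith

theorem sum_standardMonomials_le (hσ : Fintype.card σ = r + 2) (hα : 0 < α.degree) (hδ : 0 < δ)
    (hk : IsAdmissibleDegree r α.degree δ k) (m : σ) :
    ((∑ β ∈ standardMonomials α k, β m : ℕ) : ℝ) ≤ k * (standardMonomials α k).card *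
      ((α.degree - α m) / ((r + 1) * α.degree) + δ) := by
  have hsum : ((r : ℝ) + 1) * (∑ β ∈ standardMonomials α k, β m : ℕ) ≤
      (((α.degree : ℝ) - α m) * k + (r + 1) * α.degree ^ 2) * (k + r).choose r := by
    rw [← Nat.cast_sub (Finsupp.le_degree m α)]
    exact_mod_cast mul_sum_standardMonomials_le hσ α m k
  have hcard := mul_sub_pow_le_card_mul_factorial hσ hk.1.le
  set S : ℝ := ((∑ β ∈ standardMonomials α k, β m : ℕ) : ℝ)
  set s : ℝ := ((standardMonomials α k).card : ℝ)
  have hD : (0 : ℝ) < α.degree := by exact_mod_cast hα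
  set D : ℝ := (α.degree : ℝ)
  have hα₀ : 0 ≤ D - α m := sub_nonneg.2 (Nat.cast_le.2 (Finsupp.le_degree m α))
  have hα₁ : D - α m ≤ (r + 1) * D := by
    linarith [mul_nonneg r.cast_nonneg hD.le, (α m).cast_nonneg (α := ℝ)]
  have hchoose : ((k + r).choose r : ℝ) * r.factorial ≤ (k + r) ^ r := by
    rw [← le_div_iff₀ (by positivity)]
    exact_mod_cast Nat.choose_le_pow_div (α := ℝ) r (k + r)
  have hmul : S * ((r + 1) * D) * r.factorial ≤
      k * s * (D - α m + (r + 1) * D * δ) * r.factorial := by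
    calc S * ((r + 1) * D) * r.factorial = (r + 1) * S * r.factorial * D := by ring
      _ ≤ ((D - α m) * k + (r + 1) * D ^ 2) * (k + r).choose r * r.factorial * D := by gcongr
      _ ≤ ((D - α m) * k + (r + 1) * D ^ 2) * (k + r) ^ r * D := by
        rw [mul_assoc _ _ (r.factorial : ℝ)]
        gcongr
      _ ≤ k * (k - D) ^ r * (D - α m + (r + 1) * D * δ) * D :=
        mul_le_mul_of_nonneg_right (hk.mul_pow_le hδ hα₁) hD.le
      _ = k * (D - α m + (r + 1) * D * δ) * (D * (k - D) ^ r) := by ring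
      _ ≤ k * (D - α m + (r + 1) * D * δ) * (s * r.factorial) := by gcongr
      _ = k * s * (D - α m + (r + 1) * D * δ) * r.factorial := by ring
  have hdiv := (le_div_iff₀ (by positivity)).2 (le_of_mul_le_mul_right hmul (by positivity))
  refine hdiv.trans_eq ?_
  field_simp

theorem IsAdmissibleDegree.mul_choose_le (hk : IsAdmissibleDegree r d δ k) (hδ : 0 < δ)
    {μ s : ℕ} {θ : ℝ} (hθ : 1 ≤ θ) (hμθ : μ * θ ^ r = d)
    (hs : (d : ℝ) * ((k : ℝ) - d) ^ r ≤ s * r.factorial) :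
    μ * ((⌈θ * k⌉₊ + r).choose (r + 1) : ℝ) ≤ θ * (1 + δ) * k * s / (r + 1) := by
  have hdk : (0 : ℝ) ≤ k - d := sub_nonneg.2 (by exact_mod_cast hk.1.le)
  set J := ⌈θ * k⌉₊
  have hJ : (J : ℝ) + r ≤ θ * (k + r + d + 1) := by
    have hceil : (J : ℝ) < θ * k + 1 := Nat.ceil_lt_add_one (by positivity)
    linarith [mul_nonneg (sub_nonneg.2 hθ) (show (0 : ℝ) ≤ r + d + 1 by positivity),
      d.cast_nonneg (α := ℝ)]
  have hchoose : ((J + r).choose (r + 1) : ℝ) * ((r + 1) * r.factorial) ≤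
      (θ * (k + r + d + 1)) ^ (r + 1) := by
    have h := Nat.choose_le_pow_div (α := ℝ) (r + 1) (J + r)
    rw [le_div_iff₀ (by positivity), Nat.factorial_succ] at h
    push_cast at h
    exact h.trans (by gcongr)
  rw [le_div_iff₀ (by positivity)]
  refine le_of_mul_le_mul_right ?_ (show (0 : ℝ) < r.factorial by positivity)
  calc μ * ((J + r).choose (r + 1) : ℝ) * (r + 1) * r.factorial
      = μ * ((J + r).choose (r + 1) * ((r + 1) * r.factorial)) := by ring
    _ ≤ μ * (θ * (k + r + d + 1)) ^ (r + 1) := by gcongr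
    _ = μ * θ ^ r * θ * ((k : ℝ) + r + d + 1) ^ (r + 1) := by rw [mul_pow]; ring
    _ ≤ d * θ * ((1 + δ) * ((k : ℝ) - d) ^ (r + 1)) := by rw [hμθ]; gcongr; exact hk.2
    _ = θ * (1 + δ) * ((k : ℝ) - d) * (d * ((k : ℝ) - d) ^ r) := by ring
    _ ≤ θ * (1 + δ) * k * (s * r.factorial) := by
      gcongr
      linarith [d.cast_nonneg (α := ℝ)]
    _ = θ * (1 + δ) * k * s * r.factorial := by ring

/-- `θ` stands for the exponent `(d / μ) ^ (1 / r)` of a prime; to leading order, the exponent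
`s J - μ (J + r choose r + 1)` is largest at `J = θ k`. -/
theorem IsAdmissibleDegree.mul_le_sub_choose (hk : IsAdmissibleDegree r d δ k) (hδ : 0 < δ)
    (hr : 1 ≤ r) {μ s : ℕ} {θ : ℝ} (hθ : 1 ≤ θ) (hμθ : μ * θ ^ r = d)
    (hs : (d : ℝ) * ((k : ℝ) - d) ^ r ≤ s * r.factorial) :
    (1 - δ) * θ * (k * s * (r / (r + 1))) ≤
      ((s * ⌈θ * k⌉₊ - μ * (⌈θ * k⌉₊ + r).choose (r + 1) : ℕ) : ℝ) := by
  have hloss := hk.mul_choose_le hδ hθ hμθ hs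
  set J := ⌈θ * k⌉₊
  have hgap : (0 : ℝ) ≤ θ * k * s * (δ * (r - 1) / (r + 1)) := by
    have := sub_nonneg.2 (show (1 : ℝ) ≤ r by exact_mod_cast hr)
    positivity
  calc (1 - δ) * θ * (k * s * (r / (r + 1)))
      ≤ s * (θ * k) - θ * (1 + δ) * k * s / (r + 1) := by
        refine le_of_sub_nonneg (hgap.trans_eq ?_)
        field_simp
        ring
    _ ≤ (s * J : ℕ) - (μ * (J + r).choose (r + 1) : ℕ) := by
        push_cast
        gcongr
        exact Nat.le_ceil _
    _ ≤ ((s * J - μ * (J + r).choose (r + 1) : ℕ) : ℝ) := by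
        rw [sub_le_iff_le_add]
        exact_mod_cast le_tsub_add

end Asymptotics

section Logarithms

variable {K c δ ε : ℝ}

/- In the application `P = ∑ θ_i log p_i`, `D = ∑ a_m log B_m`, `T = ∑ log B_m`, `c = r / (r + 1)`,
`K` is `k` times the size of the matrix, and `L` is the logarithm of the factorial of that size. -/
theorem le_div_of_linear_bounds {P D T L : ℝ} (hT : 0 ≤ T) (hDT : D ≤ T) (hK : 1 ≤ K)
    (hc : 1 / 2 ≤ c) (hε : 0 < ε) (hδ : 0 ≤ δ) (hδ₁ : δ ≤ 1 / 2) (hδε : δ ≤ ε / 16)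
    (hP : c⁻¹ * D + ε * T ≤ P) (hL : (1 - δ) * (K * c) * P ≤ L + K * (D + δ * T)) :
    T ≤ 8 * L / ε := by
  have hc₀ : 0 < c := by linarith
  have hδ₀ : 0 ≤ 1 - δ := by linarith
  have hupper : K * ((1 - δ) * c * ε * T) ≤ L + K * (2 * δ * T) := by
    have hlower := mul_le_mul_of_nonneg_left hP (show 0 ≤ (1 - δ) * (K * c) by positivity)
    have hcD : c * (c⁻¹ * D) = D := mul_inv_cancel_left₀ hc₀.ne' D
    have hδD : K * δ * D ≤ K * δ * T := by gcongr
    have hexpand : (1 - δ) * (K * c) * (c⁻¹ * D + ε * T) =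
        (1 - δ) * K * D + K * ((1 - δ) * c * ε * T) := by
      linear_combination (1 - δ) * K * hcD
    linarith
  have hgain : ε / 8 ≤ (1 - δ) * c * ε - 2 * δ := by
    have : 1 / 2 * (1 / 2) * ε ≤ (1 - δ) * c * ε := by gcongr; linarith
    linarith
  rw [le_div_iff₀ hε]
  have hεT : 0 ≤ ε / 8 * T := by positivity
  have hKT := mul_le_mul_of_nonneg_right hgain hT
  have h1K := mul_le_mul_of_nonneg_right hK hεT
  have := mul_le_mul_of_nonneg_left hKT (zero_le_one.trans hK)
  linarith

variable {ι κ : Type*} [Fintype ι] [Fintype κ] {p θ : ι → ℝ} {e : ι → ℕ} {B a : κ → ℝ}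
  {w : κ → ℕ} {M : ℝ}

theorem log_prod_rpow (hB : ∀ m, 0 < B m) :
    Real.log (∏ m, B m ^ a m) = ∑ m, a m * Real.log (B m) := by
  rw [Real.log_prod fun m _ => (Real.rpow_pos_of_pos (hB m) _).ne']
  exact Finset.sum_congr rfl fun m _ => Real.log_rpow (hB m) _

theorem le_exp_of_prod_pow_le (hp : ∀ i, 1 ≤ p i) (hB : ∀ m, 1 ≤ B m) (ha : ∀ m, a m ≤ 1)
    (hM : 0 < M) (hK : 1 ≤ K) (hc : 1 / 2 ≤ c) (hε : 0 < ε) (hδ : 0 ≤ δ) (hδ₁ : δ ≤ 1 / 2)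
    (hδε : δ ≤ ε / 16) (he : ∀ i, (1 - δ) * θ i * (K * c) ≤ e i)
    (hw : ∀ m, w m ≤ K * (a m + δ)) (hprod : ∏ i, p i ^ e i ≤ M * ∏ m, B m ^ w m)
    (hθ : (∏ m, B m ^ a m) ^ c⁻¹ * (∏ m, B m) ^ ε ≤ ∏ i, p i ^ θ i) (m : κ) :
    B m ≤ Real.exp (8 * Real.log M / ε) := by
  have hp₀ i : 0 < p i := zero_lt_one.trans_le (hp i)
  have hB₀ m : 0 < B m := zero_lt_one.trans_le (hB m)
  have hlogp i : 0 ≤ Real.log (p i) := Real.log_nonneg (hp i)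
  have hlogB m : 0 ≤ Real.log (B m) := Real.log_nonneg (hB m)
  have hBa : 0 < ∏ m, B m ^ a m := Finset.prod_pos fun m _ => Real.rpow_pos_of_pos (hB₀ m) _
  have hBprod : 0 < ∏ m, B m := Finset.prod_pos fun m _ => hB₀ m
  have hlogprod : ∑ i, e i * Real.log (p i) ≤ Real.log M + ∑ m, w m * Real.log (B m) := by
    simp only [← Real.rpow_natCast] at hprod
    have h := Real.log_le_log (Finset.prod_pos fun i _ => Real.rpow_pos_of_pos (hp₀ i) _) hprod
    rwa [Real.log_mul hM.ne' (Finset.prod_pos fun m _ => Real.rpow_pos_of_pos (hB₀ m) _).ne',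
      log_prod_rpow hp₀, log_prod_rpow hB₀] at h
  have hlogθ : c⁻¹ * ∑ m, a m * Real.log (B m) + ε * ∑ m, Real.log (B m) ≤
      ∑ i, θ i * Real.log (p i) := by
    have h := Real.log_le_log (by positivity) hθ
    rwa [Real.log_mul (by positivity) (by positivity), Real.log_rpow hBa, Real.log_rpow hBprod,
      log_prod_rpow hB₀, log_prod_rpow hp₀, Real.log_prod fun m _ => (hB₀ m).ne'] at h
  rw [← Real.log_le_iff_le_exp (hB₀ m)]
  refine (Finset.single_le_sum (fun m _ => hlogB m) (Finset.mem_univ m)).trans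
    (le_div_of_linear_bounds (Finset.sum_nonneg fun m _ => hlogB m)
      (Finset.sum_le_sum fun m _ => mul_le_of_le_one_left (hlogB m) (ha m)) hK hc hε hδ hδ₁ hδε
      hlogθ ?_)
  calc (1 - δ) * (K * c) * ∑ i, θ i * Real.log (p i)
      = ∑ i, (1 - δ) * θ i * (K * c) * Real.log (p i) := by
        rw [Finset.mul_sum]
        exact Finset.sum_congr rfl fun i _ => by ring
    _ ≤ ∑ i, e i * Real.log (p i) :=
        Finset.sum_le_sum fun i _ => mul_le_mul_of_nonneg_right (he i) (hlogp i)
    _ ≤ Real.log M + ∑ m, w m * Real.log (B m) := hlogprod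
    _ ≤ Real.log M + ∑ m, K * (a m + δ) * Real.log (B m) := by
        gcongr with m
        exacts [hlogB m, hw m]
    _ = Real.log M + K * (∑ m, a m * Real.log (B m) + δ * ∑ m, Real.log (B m)) := by
        simp only [Finset.mul_sum, ← Finset.sum_add_distrib]
        congr 1
        exact Finset.sum_congr rfl fun m _ => by ring

end Logarithms

section Determinant

variable {σ : Type*} [Fintype σ] {A : Finset (σ →₀ ℕ)} [DecidableEq A]

theorem abs_det_monomialMatrix_le {R : Type*} [CommRing R] [LinearOrder R] [IsStrictOrderedRing R]
    {ξ : A → σ → R} {B : σ → R} (hξ : ∀ j m, |ξ j m| ≤ B m) :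
    |(monomialMatrix A ξ).det| ≤ A.card.factorial * ∏ m, B m ^ ∑ β ∈ A, β m := by
  have term_le (τ : Equiv.Perm A) :
      |Equiv.Perm.sign τ • ∏ j, monomialMatrix A ξ (τ j) j| ≤ ∏ m, B m ^ ∑ β ∈ A, β m := by
    calc |Equiv.Perm.sign τ • ∏ j, monomialMatrix A ξ (τ j) j|
        = ∏ j, ∏ m, |ξ j m| ^ (τ j).1 m := by
          rcases Int.units_eq_one_or (Equiv.Perm.sign τ) with h | h <;>
            simp [h, Finset.abs_prod, abs_pow, monomialMatrix]
      _ ≤ ∏ j, ∏ m, B m ^ (τ j).1 m := by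
          gcongr with j _ m
          exact hξ j m
      _ = ∏ m, B m ^ ∑ β ∈ A, β m := by
          rw [Equiv.prod_comp τ fun β : A => ∏ m, B m ^ β.1 m, Finset.prod_comm]
          refine Finset.prod_congr rfl fun m _ => ?_
          rw [Finset.prod_pow_eq_pow_sum, Finset.sum_coe_sort A fun β => β m]
  rw [Matrix.det_apply]
  refine (Finset.abs_sum_le_sum_abs _ _).trans
    ((Finset.sum_le_card_nsmul _ _ _ fun τ _ => term_le τ).trans_eq ?_)
  rw [Finset.card_univ, Fintype.card_perm, Fintype.card_coe, nsmul_eq_mul]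

theorem card_le_of_det_monomialMatrix_ne_zero {ξ : A → σ → ℤ} {R : ℕ} (hξ : ∀ j m, |ξ j m| ≤ R)
    (hdet : (monomialMatrix A ξ).det ≠ 0) : A.card ≤ (2 * R + 1) ^ Fintype.card σ := by
  classical
  have ξ_injective : Function.Injective ξ := by
    intro i j hij
    by_contra hne
    exact hdet (Matrix.det_zero_of_column_eq hne fun β => by
      simp only [monomialMatrix, Matrix.of_apply, hij])
  have hbox := Finset.card_le_card_of_injOn (s := Finset.univ)
    (t := Fintype.piFinset fun _ : σ => Finset.Icc (-(R : ℤ)) R) ξ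
    (fun j _ => Fintype.mem_piFinset.2 fun m => Finset.mem_Icc.2 (abs_le.1 (hξ j m)))
    ξ_injective.injOn
  rw [Finset.card_univ, Fintype.card_coe, Fintype.card_piFinset,
    Finset.prod_const, Finset.card_univ, Int.card_Icc] at hbox
  exact hbox.trans_eq (by congr 1; omega)

theorem prod_pow_le_of_prime_pow_dvd_det {ι : Type*} [Fintype ι] {p e : ι → ℕ}
    (hp : ∀ i, (p i).Prime) (hp_inj : Function.Injective p) {ξ : A → σ → ℤ} {B : σ → ℝ}
    (hξ : ∀ j m, (|ξ j m| : ℝ) ≤ B m) (hdvd : ∀ i, (p i : ℤ) ^ e i ∣ (monomialMatrix A ξ).det)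
    (hdet : (monomialMatrix A ξ).det ≠ 0) :
    ∏ i, (p i : ℝ) ^ e i ≤ A.card.factorial * ∏ m, B m ^ ∑ β ∈ A, β m := by
  have hprod : ∏ i, (p i : ℤ) ^ e i ∣ (monomialMatrix A ξ).det :=
    Finset.prod_dvd_of_coprime (fun i _ j _ hij => IsCoprime.pow (Nat.isCoprime_iff_coprime.2
      ((Nat.coprime_primes (hp i) (hp j)).2 (hp_inj.ne hij)))) fun i _ => hdvd i
  calc ∏ i, (p i : ℝ) ^ e i ≤ |((monomialMatrix A ξ).det : ℝ)| := by
        exact_mod_cast Int.le_of_dvd (abs_pos.2 hdet) ((dvd_abs _ _).2 hprod)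
    _ = |(monomialMatrix A fun j m => (ξ j m : ℝ)).det| :=
        congrArg abs (map_det_monomialMatrix (Int.castRingHom ℝ) A ξ)
    _ ≤ A.card.factorial * ∏ m, B m ^ ∑ β ∈ A, β m := abs_det_monomialMatrix_le hξ

end Determinant

section AuxiliaryForm

variable {σ : Type*} [Fintype σ] [DecidableEq σ] {F : MvPolynomial σ ℤ} {α : σ →₀ ℕ} {k : ℕ}
  {lo : LinearOrder (σ →₀ ℕ)}

theorem exists_isHomogeneous_not_dvd
    (hadd : ∀ β γ δ : σ →₀ ℕ, lo.lt β γ → lo.lt (β + δ) (γ + δ)) (hα : α ∈ F.support)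
    (hmax : ∀ β ∈ F.support, lo.le β α) {S : Set (σ → ℤ)}
    (hS : ∀ ξ : standardMonomials α k → σ → ℤ, (∀ j, ξ j ∈ S) →
      (monomialMatrix (standardMonomials α k) ξ).det = 0) :
    ∃ G : MvPolynomial σ ℚ, G.IsHomogeneous k ∧ ¬ map (Int.castRingHom ℚ) F ∣ G ∧
      ∀ ξ ∈ S, eval (fun m => (ξ m : ℚ)) G = 0 := by
  have hsupport := support_map_of_injective F (Int.castRingHom ℚ).injective_int
  rcases exists_supported_or_det_ne_zero (standardMonomials α k)
    ((fun (ξ : σ → ℤ) m => (ξ m : ℚ)) '' S) with ⟨G, hG, hGsupp, hGS⟩ | ⟨x, hxS, hdet⟩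
  · refine ⟨G, fun β hβ => ?_, ?_, fun ξ hξ => hGS _ ⟨ξ, hξ, rfl⟩⟩
    · rw [← (mem_standardMonomials.1 (hGsupp (mem_support_iff.2 hβ))).1,
        Finsupp.degree_eq_weight_one]
      rfl
    · exact not_dvd_of_forall_not_le lo hadd (hsupport ▸ hα) (hsupport ▸ hmax) hG
        fun β hβ => (mem_standardMonomials.1 (hGsupp hβ)).2
  · choose ξ hξS hξ using hxS
    refine absurd ?_ hdet
    obtain rfl : (fun j m => (ξ j m : ℚ)) = x := funext hξ
    exact (map_det_monomialMatrix (Int.castRingHom ℚ) _ ξ).symm.trans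
      ((congrArg _ (hS ξ hξS)).trans (map_zero _))

end AuxiliaryForm

section DegreeBound

theorem totalDegree_bind₁_le {σ τ R : Type*} [CommRing R] {q : σ → MvPolynomial τ R}
    (hq : ∀ i, (q i).totalDegree ≤ 1) (f : MvPolynomial σ R) :
    (bind₁ q f).totalDegree ≤ f.totalDegree := by
  rw [f.as_sum, map_sum, ← f.as_sum]
  refine totalDegree_finsetSum_le fun β hβ => ?_
  calc (bind₁ q (monomial β (coeff β f))).totalDegree
      ≤ (∏ i ∈ β.support, q i ^ β i).totalDegree := by
        rw [bind₁_monomial]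
        exact (totalDegree_mul _ _).trans_eq (by rw [totalDegree_C, zero_add])
    _ ≤ ∑ i ∈ β.support, β i * (q i).totalDegree :=
        (totalDegree_finsetProd _ _).trans (Finset.sum_le_sum fun i _ => totalDegree_pow _ _)
    _ ≤ ∑ i ∈ β.support, β i :=
        Finset.sum_le_sum fun i _ => mul_le_of_le_one_right (Nat.zero_le _) (hq i)
    _ ≤ f.totalDegree := le_totalDegree hβ

theorem MultiplicityAt.le {n p d μ : ℕ} [Nontrivial (ZMod p)] {F : MvPolynomial (Fin n) ℤ}
    (hF : F.IsHomogeneous d) {v : Fin n → ZMod p} (hμ : MultiplicityAt p F v μ) : μ ≤ d := by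
  have hlinear i : (C (v i) + X i : MvPolynomial (Fin n) (ZMod p)).totalDegree ≤ 1 :=
    (totalDegree_add _ _).trans (max_le (by simp) (totalDegree_X i).le)
  by_contra! hlt
  exact hμ.2 (homogeneousComponent_eq_zero _ _
    (((totalDegree_bind₁_le hlinear _).trans (hF.map _).totalDegree_le).trans_lt hlt))

end DegreeBound

section SmallBox

theorem lt_choose_add {r : ℕ} (hr : 1 ≤ r) (x : ℕ) : x < (x + (r + 1)).choose r := by
  obtain ⟨l, rfl⟩ := Nat.exists_eq_add_of_le' hr
  calc x < (x + 1 + 1).choose (x + 1) := by rw [Nat.choose_succ_self_right]; omega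
    _ ≤ (x + 1 + (l + 1)).choose (x + 1) := Nat.choose_le_choose _ (by omega)
    _ = (x + (l + 1 + 1)).choose (l + 1) := by rw [Nat.choose_symm_add]; congr 1; omega

theorem det_monomialMatrix_standardMonomials_eq_zero {σ : Type*} [Fintype σ] [DecidableEq σ]
    {r k : ℕ} {α : σ →₀ ℕ} {W : ℝ} (hr : 1 ≤ r) (hσ : Fintype.card σ = r + 2) (hα : 0 < α.degree)
    (hk : k = (2 * ⌈W⌉₊ + 1) ^ (r + 2) + α.degree)
    {ξ : standardMonomials α k → σ → ℤ} (hξ : ∀ j m, (|ξ j m| : ℝ) ≤ W) :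
    (monomialMatrix (standardMonomials α k) ξ).det = 0 := by
  by_contra hdet
  have hbox := card_le_of_det_monomialMatrix_ne_zero (R := ⌈W⌉₊)
    (fun j m => by exact_mod_cast (hξ j m).trans (Nat.le_ceil W)) hdet
  have hcard := mul_choose_le_card_standardMonomials hσ α (hk ▸ Nat.le_add_left _ _ : α.degree ≤ k)
  rw [hk, Nat.add_sub_cancel, ← hk] at hcard
  rw [hσ] at hbox
  exact (lt_choose_add hr _).not_ge (((Nat.le_mul_of_pos_left _ hα).trans hcard).trans hbox)

end SmallBox

section LargeBox

theorem one_le_rpow_one_div {r d μ : ℕ} (hμ : 1 ≤ μ) (hμd : μ ≤ d) :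
    1 ≤ ((d : ℝ) / μ) ^ (1 / (r : ℝ)) :=
  Real.one_le_rpow ((one_le_div₀ (by positivity)).2 (by exact_mod_cast hμd)) (by positivity)

theorem mul_rpow_one_div_pow {r d μ : ℕ} (hr : 1 ≤ r) (hμ : 1 ≤ μ) :
    μ * (((d : ℝ) / μ) ^ (1 / (r : ℝ))) ^ r = d := by
  rw [one_div, Real.rpow_inv_natCast_pow (by positivity) (by omega)]
  field_simp

theorem le_exp_of_det_monomialMatrix_ne_zero {r d k : ℕ} {δ ε : ℝ} (hr : 1 ≤ r) (hd : 0 < d)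
    (hε : 0 < ε) (hδ : 0 < δ) (hδ₁ : δ ≤ 1 / 2) (hδε : δ ≤ ε / 16)
    (hk : IsAdmissibleDegree r d δ k) {F : MvPolynomial (Fin (r + 2)) ℤ} (hF : F.IsHomogeneous d)
    {α : Fin (r + 2) →₀ ℕ} (hα : α.degree = d) {a B : Fin (r + 2) → ℝ}
    (ha : ∀ m, a m = ((d : ℝ) - α m) / ((r + 1) * d)) (hB : ∀ m, 1 ≤ B m)
    {ι : Type*} [Fintype ι] {p : ι → ℕ} (hp : ∀ i, (p i).Prime) (hp_inj : Function.Injective p)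
    {v : (i : ι) → Fin (r + 2) → ZMod (p i)} (hv : ∀ i, v i ≠ 0)
    {μ : ι → ℕ} (hμ₁ : ∀ i, 1 ≤ μ i) (hμ : ∀ i, MultiplicityAt (p i) F (v i) (μ i))
    (hprod : (∏ m, B m ^ a m) ^ (((r : ℝ) + 1) / r) * (∏ m, B m) ^ ε ≤
      ∏ i, (p i : ℝ) ^ ((d : ℝ) / μ i) ^ (1 / (r : ℝ)))
    {ξ : standardMonomials α k → Fin (r + 2) → ℤ} (hξB : ∀ j m, (|ξ j m| : ℝ) ≤ B m)
    (hξF : ∀ j, eval (ξ j) F = 0) (hξv : ∀ j i, ReducesTo (p i) (ξ j) (v i))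
    (hdet : (monomialMatrix (standardMonomials α k) ξ).det ≠ 0) (m : Fin (r + 2)) :
    B m ≤ Real.exp (8 * Real.log ((k + (r + 1)).choose (r + 1)).factorial / ε) := by
  subst hα
  have hσ : Fintype.card (Fin (r + 2)) = r + 2 := Fintype.card_fin _
  have hμd i : μ i ≤ α.degree := by
    have := Fact.mk (hp i)
    exact (hμ i).le hF
  have hdet_le := prod_pow_le_of_prime_pow_dvd_det hp hp_inj hξB (fun i =>
    prime_pow_dvd_det_monomialMatrix (hp i) hF (hv i) (hμ i)
      (fun β hβ => (mem_standardMonomials.1 hβ).1) (fun j => hξv j i) hξF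
      ⌈((α.degree : ℝ) / μ i) ^ (1 / (r : ℝ)) * k⌉₊) hdet
  have hfactorial : ((standardMonomials α k).card.factorial : ℝ) ≤
      ((k + (r + 1)).choose (r + 1)).factorial :=
    Nat.cast_le.2 (Nat.factorial_le (card_standardMonomials_le hσ α k))
  refine le_exp_of_prod_pow_le (K := k * (standardMonomials α k).card) (c := r / (r + 1))
    (fun i => by exact_mod_cast (hp i).one_le) hB (fun m => ?_)
    (by exact_mod_cast Nat.factorial_pos _) ?_ ?_ hε hδ.le hδ₁ hδε
    (fun i => hk.mul_le_sub_choose hδ hr (one_le_rpow_one_div (hμ₁ i) (hμd i))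
      (mul_rpow_one_div_pow hr (hμ₁ i)) (mul_sub_pow_le_card_mul_factorial hσ hk.1.le))
    (fun m => ha m ▸ sum_standardMonomials_le hσ hd hδ hk m)
    (hdet_le.trans (mul_le_mul_of_nonneg_right hfactorial ?_)) (by rwa [inv_div]) m
  · rw [ha, div_le_one (by positivity)]
    linarith [(α m).cast_nonneg (α := ℝ), mul_nonneg r.cast_nonneg (α.degree.cast_nonneg (α := ℝ))]
  · have hcard := (Nat.mul_pos hd (Nat.choose_pos (by omega))).trans_le
      (mul_choose_le_card_standardMonomials hσ α hk.1.le)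
    exact_mod_cast Nat.mul_pos (hd.trans hk.1) hcard
  · rw [div_le_div_iff₀ two_pos (by positivity)]
    linarith [show (1 : ℝ) ≤ r by exact_mod_cast hr]
  · exact Finset.prod_nonneg fun m _ => pow_nonneg (zero_le_one.trans (hB m)) _

end LargeBox

theorem stmt_9_general (n d : ℕ) (hn : 2 ≤ n) (hd : 1 ≤ d) (ε : ℝ) (hε : 0 < ε) :
    ∃ C : ℕ, ∀ F : MvPolynomial (Fin (n + 1)) ℤ,
      F.IsHomogeneous d →
      ∀ lo : LinearOrder (Fin (n + 1) →₀ ℕ),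
        (∀ α β γ : Fin (n + 1) →₀ ℕ, lo.lt α β → lo.lt (α + γ) (β + γ)) →
      ∀ αs : Fin (n + 1) →₀ ℕ, αs ∈ F.support → (∀ β ∈ F.support, lo.le β αs) →
      ∀ a : Fin (n + 1) → ℝ, (∀ m, a m = ((d : ℝ) - αs m) / ((n : ℝ) * d)) →
      ∀ B : Fin (n + 1) → ℝ, (∀ m, 1 ≤ B m) →
      ∀ t : ℕ, ∀ p : Fin t → ℕ, (∀ i, (p i).Prime) → Function.Injective p →
      ∀ v : (i : Fin t) → Fin (n + 1) → ZMod (p i), (∀ i, v i ≠ 0) →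
      ∀ μ : Fin t → ℕ, (∀ i, 1 ≤ μ i) → (∀ i, MultiplicityAt (p i) F (v i) (μ i)) →
      (∏ i, (p i : ℝ) ^ (((d : ℝ) / μ i) ^ ((1 : ℝ) / ((n : ℝ) - 1)))
          ≥ (∏ m, B m ^ a m) ^ ((n : ℝ) / ((n : ℝ) - 1)) * (∏ m, B m) ^ ε) →
      ∃ G : MvPolynomial (Fin (n + 1)) ℚ, ∃ e ≤ C, G.IsHomogeneous e ∧
        ¬ (MvPolynomial.map (Int.castRingHom ℚ) F ∣ G) ∧
        ∀ ξ : Fin (n + 1) → ℤ,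
          (∀ m, (|ξ m| : ℝ) ≤ B m) → eval ξ F = 0 →
          (∀ i, ReducesTo (p i) ξ (v i)) →
          eval (fun m => (ξ m : ℚ)) G = 0 := by
  obtain ⟨r, rfl⟩ := Nat.exists_eq_add_of_le' (one_le_two.trans hn)
  have hr : 1 ≤ r := by omega
  have hδ : 0 < min (1 / 2) (ε / 16) := by positivity
  obtain ⟨k, hk⟩ := exists_isAdmissibleDegree r d hδ
  let W := Real.exp (8 * Real.log ((k + (r + 1)).choose (r + 1)).factorial / ε)
  let l := (2 * ⌈W⌉₊ + 1) ^ (r + 2) + d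
  refine ⟨max k l, fun F hF lo hadd α hα hmax a ha B hB t p hp hp_inj v hv μ hμ₁ hμ hprod => ?_⟩
  simp only [Nat.cast_add, Nat.cast_one, add_sub_cancel_right] at ha hprod
  have hdeg : α.degree = d := by_contra fun h => mem_support_iff.1 hα (hF.coeff_eq_zero h)
  let S := {ξ : Fin (r + 2) → ℤ |
    (∀ m, (|ξ m| : ℝ) ≤ B m) ∧ eval ξ F = 0 ∧ ∀ i, ReducesTo (p i) ξ (v i)}
  suffices h : ∃ e ≤ max k l, ∀ ξ : standardMonomials α e → Fin (r + 2) → ℤ, (∀ j, ξ j ∈ S) →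
      (monomialMatrix (standardMonomials α e) ξ).det = 0 by
    obtain ⟨e, he, hdet⟩ := h
    obtain ⟨G, hG, hFG, hGS⟩ := exists_isHomogeneous_not_dvd hadd hα hmax hdet
    exact ⟨G, e, he, hG, hFG, fun ξ hξB hξF hξv => hGS ξ ⟨hξB, hξF, hξv⟩⟩
  by_cases hBW : ∀ m, B m ≤ W
  · exact ⟨l, le_max_right _ _, fun ξ hξ => det_monomialMatrix_standardMonomials_eq_zero hr
      (Fintype.card_fin _) (hdeg ▸ hd) (by rw [hdeg]) fun j m => ((hξ j).1 m).trans (hBW m)⟩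
  · refine ⟨k, le_max_left _ _, fun ξ hξ => ?_⟩
    by_contra hdet
    exact hBW (le_exp_of_det_monomialMatrix_ne_zero hr hd hε hδ (min_le_left _ _) (min_le_right _ _)
      hk hF hdeg ha hB hp hp_inj hv hμ₁ hμ hprod (fun j => (hξ j).1) (fun j => (hξ j).2.1)
      (fun j => (hξ j).2.2) hdet)

/-- Theorem 3.2 of Salberger, for a hypersurface `X = {F = 0} ⊂ P^n` (`r = n - 1`,
`a_m = (d - α_m)/(nd)` where `x^α` is the leading monomial of `F` for a graded monomial
ordering, as in Remark 1.10(b)): if `p_1, …, p_t` are distinct primes, `P_i` is an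
`𝔽_{p_i}`-point of multiplicity `μ_i` on `X_{p_i}`, and
`p_1^{(d/μ_1)^{1/r}} ⋯ p_t^{(d/μ_t)^{1/r}} ≥ (B_0^{a_0}⋯B_n^{a_n})^{(r+1)/r}(B_0⋯B_n)^ε`,
then there is a form `G` of degree `O_{d,n,ε}(1)`, not divisible by `F`, vanishing at
all rational points of `X` with a primitive integral representative `ξ` satisfying
`|ξ_m| ≤ B_m` which reduce to `P_i` mod `p_i` for all `i`. -/
theorem stmt_9 (n d : ℕ) (hn : 2 ≤ n) (hd : 1 ≤ d) (ε : ℝ) (hε : 0 < ε) :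
    ∃ C : ℕ, ∀ F : MvPolynomial (Fin (n + 1)) ℤ,
      (∀ c : ℤ, (∀ m, c ∣ F.coeff m) → IsUnit c) →
      F.IsHomogeneous d →
      Irreducible (MvPolynomial.map (Int.castRingHom ℚ) F) →
      ∀ lo : LinearOrder (Fin (n + 1) →₀ ℕ),
        (∀ α : Fin (n + 1) →₀ ℕ, lo.le 0 α) →
        (∀ α β γ : Fin (n + 1) →₀ ℕ, lo.lt α β → lo.lt (α + γ) (β + γ)) →
        (∀ α β : Fin (n + 1) →₀ ℕ, lo.le α β → (∑ i, α i) ≤ ∑ i, β i) →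
      ∀ αs : Fin (n + 1) →₀ ℕ, αs ∈ F.support → (∀ β ∈ F.support, lo.le β αs) →
      ∀ a : Fin (n + 1) → ℝ, (∀ m, a m = ((d : ℝ) - αs m) / ((n : ℝ) * d)) →
      ∀ B : Fin (n + 1) → ℝ, (∀ m, 1 ≤ B m) →
      ∀ t : ℕ, ∀ p : Fin t → ℕ, (∀ i, (p i).Prime) → Function.Injective p →
      ∀ v : (i : Fin t) → Fin (n + 1) → ZMod (p i), (∀ i, v i ≠ 0) →
      ∀ μ : Fin t → ℕ, (∀ i, 1 ≤ μ i) → (∀ i, MultiplicityAt (p i) F (v i) (μ i)) →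
      (∏ i, (p i : ℝ) ^ (((d : ℝ) / μ i) ^ ((1 : ℝ) / ((n : ℝ) - 1)))
          ≥ (∏ m, B m ^ a m) ^ ((n : ℝ) / ((n : ℝ) - 1)) * (∏ m, B m) ^ ε) →
      ∃ G : MvPolynomial (Fin (n + 1)) ℚ, ∃ e ≤ C, G.IsHomogeneous e ∧
        ¬ (MvPolynomial.map (Int.castRingHom ℚ) F ∣ G) ∧
        ∀ ξ : Fin (n + 1) → ℤ, Finset.univ.gcd ξ = 1 →
          (∀ m, (|ξ m| : ℝ) ≤ B m) → eval ξ F = 0 →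
          (∀ i, ReducesTo (p i) ξ (v i)) →
          eval (fun m => (ξ m : ℚ)) G = 0 := by
  obtain ⟨C, hC⟩ := stmt_9_general n d hn hd ε hε
  refine ⟨C, fun F _ hF _ lo _ hadd _ αs hα hmax a ha B hB t p hp hp_inj v hv μ hμ₁ hμ hprod => ?_⟩
  obtain ⟨G, e, he, hG, hFG, hGξ⟩ :=
    hC F hF lo hadd αs hα hmax a ha B hB t p hp hp_inj v hv μ hμ₁ hμ hprod
  exact ⟨G, e, he, hG, hFG, fun ξ _ => hGξ ξ⟩
end
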